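/- Let p be a prime with p > 6000. Then SD(C_p ⊕ C_p) = Ol(C_p ⊕ C_p) − 1. -/

import Mathlib

open Multiset

/-- A sequence (finite multiset) over `G` is zero-sumfree if every nonempty
subsequence has nonzero sum. -/
def IsZeroSumfree {G : Type*} [AddCommMonoid G] (S : Multiset G) : Prop :=
  ∀ T ≤ S, T ≠ 0 → T.sum ≠ 0

/-- A minimal zero-sum sequence: a nonempty sequence with sum zero all of whose
nonempty proper subsequences have nonzero sum. -/
def IsMinimalZeroSum {G : Type*} [AddCommMonoid G] (S : Multiset G) : Prop :=
  S ≠ 0 ∧ S.sum = 0 ∧ ∀ T ≤ S, T ≠ 0 → T ≠ S → T.sum ≠ 0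

/-- The cumulated multiplicity of level `ℓ` of a sequence:
`cm_ℓ(S) = Σ_{g ∈ G} max {0, v_g(S) − ℓ}`. -/
noncomputable def cmul {G : Type*} [AddCommMonoid G] (ℓ : ℕ) (S : Multiset G) : ℕ :=
  letI := Classical.decEq G
  ∑ g ∈ S.toFinset, (S.count g - ℓ)

/-- `SD_{(k,ℓ)}(G)`: the maximum length of a minimal zero-sum sequence `S` over `G`
with `cm_ℓ(S) ≤ k`. -/
noncomputable def SDpair (G : Type*) [AddCommMonoid G] (k ℓ : ℕ) : ℕ :=
  sSup {m | ∃ S : Multiset G, IsMinimalZeroSum S ∧ cmul ℓ S ≤ k ∧ Multiset.card S = m}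

/-- `SD_k(G)`: the `k`-th Strong Davenport constant. -/
noncomputable def SDk (G : Type*) [AddCommMonoid G] (k : ℕ) : ℕ := SDpair G k 1

/-- The Strong Davenport constant `SD(G) = SD_0(G)`. -/
noncomputable def SD (G : Type*) [AddCommMonoid G] : ℕ := SDk G 0

/-- The Olson constant `Ol(G) = SD_1(G)`. -/
noncomputable def Ol (G : Type*) [AddCommMonoid G] : ℕ := SDk G 1

/-- `ol_k(G)`: the maximum length of a zero-sumfree sequence `S` over `G` with
`cm(S) ≤ k`. -/
noncomputable def olk (G : Type*) [AddCommMonoid G] (k : ℕ) : ℕ :=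
  sSup {m | ∃ S : Multiset G, IsZeroSumfree S ∧ cmul 1 S ≤ k ∧ Multiset.card S = m}

/-- `Ol_k(G)`: the smallest integer `ℓ` such that every sequence `S` over `G` with
`cm(S) ≤ k` and `|S| ≥ ℓ` has a nonempty zero-sum subsequence. -/
noncomputable def Olk (G : Type*) [AddCommMonoid G] (k : ℕ) : ℕ :=
  sInf {m | ∀ S : Multiset G, cmul 1 S ≤ k → m ≤ Multiset.card S →
    ∃ T, T ≤ S ∧ T ≠ 0 ∧ T.sum = 0}

/-- The Davenport constant `D(G)`: the maximum length of a minimal zero-sum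
sequence over `G`. -/
noncomputable def DavenportD (G : Type*) [AddCommMonoid G] : ℕ :=
  sSup {m | ∃ S : Multiset G, IsMinimalZeroSum S ∧ Multiset.card S = m}

/-!
Both constants are computed: `Ol(C_p ⊕ C_p) = p + ol(C_p)` and `SD(C_p ⊕ C_p)` is one less, where
`ol = olk · 0` is the maximal size of a zero-sumfree set.

For the lower bounds take a zero-sumfree set `T` of maximal size in `C_p` and a set `P` with `n < p`
elements. The set `{0} × T ∪ {1} × P` is zero-sumfree, and adjoining minus its sum gives a minimal
zero-sum sequence. For `n = p - 1` this has at most one repetition. For `n = p - 2` the new element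
has first coordinate `2`, so there is none.

For the upper bounds it suffices that a set `B` of size `p + ol(C_p)` has a nonempty proper
zero-sum subset. If it had none, at most two of its `2 ^ #B` subsets would have sum zero, and
Fourier analysis would yield a nonzero functional `φ` whose values on `B` are concentrated near `0`.
Choose coordinates with `φ` as the first one. If all fibers of `φ` have size `O(√p)`, the
Cauchy–Davenport and Dias da Silva–Hamidoune theorems show that subset sums of `B` without one of
its elements cover the whole group, which is absurd. A larger fiber may be placed over `1`; sums of
`j` of its elements then attain all second coordinates or more than `j * (#fiber - j)` of them, so
no other elements of `B` may sum to `-j` in the first coordinate unless `j` is nearly `0` or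
`#fiber`. This forces almost all of `B` into the fibers over `1` and `0`, and the latter has at most
`ol(C_p)` elements.
-/

open scoped Finset Pointwise

section PolynomialMethod

open MvPolynomial
open scoped Nat

lemma totalDegree_sum_X_le_one {σ R : Type*} [Fintype σ] [CommSemiring R] [Nontrivial R] :
    (∑ i, X i : MvPolynomial σ R).totalDegree ≤ 1 :=
  totalDegree_finsetSum_le fun i _ ↦ (totalDegree_X i).le

lemma totalDegree_prod_sub_C_le {σ R : Type*} [CommRing R] {L : MvPolynomial σ R}
    (hL : L.totalDegree ≤ 1) (s : Finset R) : (∏ c ∈ s, (L - C c)).totalDegree ≤ #s := by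
  grw [totalDegree_finsetProd, Finset.sum_le_card_nsmul s _ 1 fun c _ ↦
    (totalDegree_sub_C_le L c).trans hL, smul_eq_mul, mul_one]

lemma coeff_mul_prod_sub_C {σ R : Type*} [CommRing R] {L : MvPolynomial σ R}
    (hL : L.totalDegree ≤ 1) (s : Finset R) {V : MvPolynomial σ R} {t : σ →₀ ℕ}
    (ht : V.totalDegree + #s ≤ t.degree) :
    coeff t (V * ∏ c ∈ s, (L - C c)) = coeff t (V * L ^ #s) := by
  classical
  induction s using Finset.induction_on generalizing V with
  | empty => simp
  | insert c s hc ih =>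
    rw [Finset.card_insert_of_notMem hc] at ht
    have hVc : (V * (L - C c)).totalDegree + #s ≤ t.degree := by
      grw [totalDegree_mul, totalDegree_sub_C_le, hL]
      lia
    have hlow : coeff t (V * L ^ #s) = 0 := by
      apply coeff_eq_zero_of_totalDegree_lt
      grw [← Finsupp.degree_apply, totalDegree_mul, totalDegree_pow, hL]
      lia
    calc coeff t (V * ∏ c ∈ insert c s, (L - C c))
        = coeff t (V * (L - C c) * L ^ #s) := by
          rw [Finset.prod_insert hc, ← mul_assoc, ih hVc]
      _ = coeff t (V * L ^ (#s + 1)) - c * coeff t (V * L ^ #s) := by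
          rw [← coeff_C_mul, ← coeff_sub]
          congr 1
          ring
      _ = coeff t (V * L ^ #(insert c s)) := by
          rw [hlow, mul_zero, sub_zero, Finset.card_insert_of_notMem hc]

lemma prod_factorial_mul_coeff_monomial_mul_sum_X_pow {σ R : Type*} [Fintype σ]
    [CommSemiring R] {c e : σ →₀ ℕ} {M : ℕ} (hM : c.degree = M + e.degree) :
    (∏ i, ((c i)! : R)) * coeff c (monomial e 1 * (∑ i, X i) ^ M) =
      M ! * ∏ i, ((c i).descFactorial (e i) : R) := by
  classical
  rw [coeff_monomial_mul', one_mul]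
  split_ifs with hec
  · have hdeg : (c - e).degree = M := by
      have := congrArg Finsupp.degree (tsub_add_cancel_of_le hec)
      rw [_root_.map_add] at this
      lia
    have hspec : (∏ i, (c i - e i)!) * Finsupp.multinomial (c - e) = M ! := by
      rw [Finsupp.multinomial_eq_of_support_subset (Finset.subset_univ _), ← hdeg,
        Finsupp.degree_eq_sum]
      exact Nat.multinomial_spec Finset.univ (c - e)
    rw [coeff_sum_X_pow_of_fintype, if_pos (show (c - e).sum (fun _ m ↦ m) = M from hdeg), ← hspec]
    push_cast
    simp_rw [← Nat.factorial_mul_descFactorial (hec _), Nat.cast_mul, Finset.prod_mul_distrib]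
    ring
  · obtain ⟨i, hi⟩ : ∃ i, c i < e i := by simpa [Finsupp.le_def] using hec
    rw [mul_zero, Finset.prod_eq_zero (Finset.mem_univ i), mul_zero]
    rw [Nat.descFactorial_of_lt hi, Nat.cast_zero]

lemma totalDegree_det_vandermonde_X_le {R : Type*} [CommRing R] [Nontrivial R] (n : ℕ) :
    (Matrix.vandermonde (X : Fin n → MvPolynomial (Fin n) R)).det.totalDegree ≤
      ∑ i : Fin n, (i : ℕ) := by
  rw [Matrix.det_apply]
  refine totalDegree_finsetSum_le fun σ _ ↦ ?_
  rw [Units.smul_def]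
  grw [totalDegree_smul_le, totalDegree_finsetProd]
  refine Finset.sum_le_sum fun i _ ↦ ?_
  rw [Matrix.vandermonde_apply]
  grw [totalDegree_pow, totalDegree_X, mul_one]

/-- Expanding the Vandermonde determinant, the multinomial coefficients become descending
factorials, which are the rows of a Vandermonde determinant in another basis. -/
lemma prod_factorial_mul_coeff_det_vandermonde_X_mul_sum_X_pow {R : Type*} [CommRing R]
    [IsDomain R] {n M : ℕ} {c : Fin n →₀ ℕ} (hM : c.degree = M + ∑ i : Fin n, (i : ℕ)) :
    (∏ i, ((c i)! : R)) * coeff c ((Matrix.vandermonde X).det * (∑ i, X i) ^ M) =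
      M ! * (Matrix.vandermonde fun i ↦ (c i : R)).det := by
  rw [Matrix.det_eval_matrixOfPolynomials_eq_det_vandermonde _
      (fun i ↦ descPochhammer R i) (fun i ↦ descPochhammer_natDegree R i)
      (fun i ↦ monic_descPochhammer R i)]
  simp_rw [Matrix.det_apply, Finset.sum_mul, coeff_sum, Finset.mul_sum]
  refine Finset.sum_congr rfl fun σ _ ↦ ?_
  let e : Fin n →₀ ℕ := Finsupp.equivFunOnFinite.symm fun j ↦ (σ.symm j : ℕ)
  have hmonomial : ∏ i, Matrix.vandermonde (X : Fin n → MvPolynomial (Fin n) R) (σ i) i =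
      monomial e 1 := by
    rw [monomial_eq, Finsupp.prod_fintype _ _ (by simp),
      ← Equiv.prod_comp σ fun j ↦ X j ^ e j]
    simp [e, Matrix.vandermonde_apply]
  have he : e.degree = ∑ i : Fin n, (i : ℕ) := by
    rw [Finsupp.degree_eq_sum]
    exact Equiv.sum_comp σ.symm fun i : Fin n ↦ (i : ℕ)
  rw [hmonomial, smul_mul_assoc, coeff_smul, mul_smul_comm,
    prod_factorial_mul_coeff_monomial_mul_sum_X_pow (by rw [hM, he]), mul_smul_comm,
    ← Equiv.prod_comp σ fun j ↦ ((c j).descFactorial (e j) : R)]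
  simp [e, descPochhammer_eval_eq_descFactorial]

lemma sum_range_add_div {j : ℕ} (hj : 0 < j) (M : ℕ) : ∑ i ∈ Finset.range j, (M + i) / j = M := by
  induction M with
  | zero => exact Finset.sum_eq_zero fun i hi ↦ by simp [Finset.mem_range.1 hi]
  | succ M ih =>
    have hlast := Finset.sum_range_succ (fun i ↦ (M + i) / j) j
    have hfirst := Finset.sum_range_succ' (fun i ↦ (M + i) / j) j
    have hdiv : (M + j) / j = M / j + 1 := Nat.add_div_right M hj
    simp only [add_right_comm M 1, add_zero, ← add_assoc] at hfirst ⊢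
    lia

lemma exists_strictMono_lt_sum_eq {j n M : ℕ} (hj : j ≤ n) (hM : M ≤ j * (n - j)) :
    ∃ c : Fin j → ℕ, StrictMono c ∧ (∀ i, c i < n) ∧ ∑ i, c i = M + ∑ i : Fin j, (i : ℕ) := by
  refine ⟨fun i ↦ i + (M + i) / j, fun a b hab ↦ ?_, fun i ↦ ?_, ?_⟩
  · have hab' : (a : ℕ) < b := hab
    exact add_lt_add_of_lt_of_le hab' (Nat.div_le_div_right (by lia))
  · have hi := i.2
    have hdiv : (M + i) / j < n - j + 1 := by
      rw [Nat.div_lt_iff_lt_mul (by lia)]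
      nlinarith
    simp only
    lia
  · rw [Finset.sum_add_distrib, add_comm, Fin.sum_univ_eq_sum_range (fun i ↦ (M + i) / j)]
    rcases j.eq_zero_or_pos with rfl | hj0
    · simpa [eq_comm] using hM
    · rw [sum_range_add_div hj0]

variable {p : ℕ} [hp : Fact p.Prime]

/-- `(∏ (X_b - X_a)) * ∏_{d ∈ I} (∑ X_i - d)` has a suitable nonzero top coefficient, so the
combinatorial Nullstellensatz applies to it. -/
lemma exists_injective_sum_notMem {A I : Finset (ZMod p)} {j : ℕ} (hj : j ≤ #A) (hIp : #I < p)
    (hI : #I ≤ j * (#A - j)) :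
    ∃ s : Fin j → ZMod p, Function.Injective s ∧ (∀ i, s i ∈ A) ∧ ∑ i, s i ∉ I := by
  obtain ⟨c, hcmono, hcA, hcsum⟩ := exists_strictMono_lt_sum_eq hj hI
  let t : Fin j →₀ ℕ := Finsupp.equivFunOnFinite.symm c
  let V : MvPolynomial (Fin j) (ZMod p) := (Matrix.vandermonde X).det
  let f := V * ∏ d ∈ I, ((∑ i, X i) - C d)
  have hVdeg : V.totalDegree ≤ ∑ i : Fin j, (i : ℕ) := totalDegree_det_vandermonde_X_le j
  have htdeg : t.degree = #I + ∑ i : Fin j, (i : ℕ) := (Finsupp.degree_eq_sum t).trans hcsum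
  have hAp : #A ≤ p := (Finset.card_le_univ A).trans_eq (ZMod.card p)
  have hcinj : Function.Injective fun i ↦ (c i : ZMod p) := fun a b hab ↦
    hcmono.injective <| CharP.natCast_injOn_Iio (ZMod p) p ((hcA a).trans_le hAp)
      ((hcA b).trans_le hAp) hab
  have hcoeff : coeff t f ≠ 0 := by
    have hfact : ((#I)! : ZMod p) ≠ 0 := by
      rw [Ne, ZMod.natCast_eq_zero_iff, hp.out.dvd_factorial]
      exact hIp.not_ge
    have hdet := Matrix.det_vandermonde_ne_zero_iff.2 hcinj
    have htop := prod_factorial_mul_coeff_det_vandermonde_X_mul_sum_X_pow (R := ZMod p) htdeg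
    rw [coeff_mul_prod_sub_C totalDegree_sum_X_le_one I (by lia)]
    exact right_ne_zero_of_mul (htop ▸ mul_ne_zero hfact hdet)
  have hfdeg : f.totalDegree = t.degree := by
    refine le_antisymm ?_ (le_totalDegree (mem_support_iff.2 hcoeff))
    grw [totalDegree_mul, hVdeg, totalDegree_prod_sub_C_le totalDegree_sum_X_le_one, htdeg,
      add_comm]
  obtain ⟨s, hsA, hs⟩ := combinatorial_nullstellensatz_exists_eval_nonzero f t hcoeff hfdeg
    (fun _ ↦ A) hcA
  simp only [f, V, map_mul, map_prod, Matrix.det_vandermonde] at hs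
  refine ⟨s, ?_, hsA, fun hsI ↦ right_ne_zero_of_mul hs (Finset.prod_eq_zero hsI (by simp))⟩
  rw [← Matrix.det_vandermonde_ne_zero_iff, Matrix.det_vandermonde]
  simpa using left_ne_zero_of_mul hs

/-- The restricted sumset `j^∧ A` of the Erdős–Heilbronn problem: all sums of `j` distinct elements
of `A`. -/
def restrictedSums {G : Type*} [AddCommMonoid G] [DecidableEq G] (j : ℕ) (A : Finset G) :
    Finset G :=
  (A.powersetCard j).image fun S ↦ ∑ x ∈ S, x

lemma mem_restrictedSums {G : Type*} [AddCommMonoid G] [DecidableEq G] {j : ℕ} {A : Finset G}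
    {g : G} : g ∈ restrictedSums j A ↔ ∃ S ⊆ A, #S = j ∧ ∑ x ∈ S, x = g := by
  simp [restrictedSums, Finset.mem_powersetCard, and_assoc]

theorem dias_da_silva_hamidoune {A : Finset (ZMod p)} {j : ℕ} (hj : j ≤ #A) :
    min p (j * (#A - j) + 1) ≤ #(restrictedSums j A) := by
  by_contra! hlt
  have := hp.out.pos
  obtain ⟨s, hsinj, hsA, hs⟩ := exists_injective_sum_notMem (I := restrictedSums j A) hj
    (by lia) (by lia)
  refine hs (mem_restrictedSums.2 ⟨Finset.univ.image s, ?_, ?_, ?_⟩)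
  · simpa [Finset.image_subset_iff] using hsA
  · simp [Finset.card_image_of_injective _ hsinj]
  · exact Finset.sum_image hsinj.injOn

end PolynomialMethod

section SubsetSums

variable {G H : Type*} [AddCommMonoid G] [DecidableEq G] [AddCommMonoid H] [DecidableEq H]

lemma add_mem_subsetSum_union {U W : Finset G} (hUW : Disjoint U W) {u w : G}
    (hu : u ∈ U.subsetSum) (hw : w ∈ W.subsetSum) : u + w ∈ (U ∪ W).subsetSum := by
  obtain ⟨S, hS, rfl⟩ := Finset.mem_subsetSum_iff.1 hu
  obtain ⟨T, hT, rfl⟩ := Finset.mem_subsetSum_iff.1 hw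
  exact Finset.mem_subsetSum_iff.2 ⟨S ∪ T, Finset.union_subset_union hS hT,
    Finset.sum_union (Finset.disjoint_of_subset_left hS (Finset.disjoint_of_subset_right hT hUW))⟩

lemma subsetSum_add_subset_subsetSum_union {U W : Finset G} (hUW : Disjoint U W) :
    U.subsetSum + W.subsetSum ⊆ (U ∪ W).subsetSum :=
  Finset.add_subset_iff.2 fun _ hu _ hw ↦ add_mem_subsetSum_union hUW hu hw

lemma pair_add_image_subsetSum_subset (f : G →+ H) {U : Finset G} {a : G} (ha : a ∉ U) :
    {0, f a} + U.subsetSum.image f ⊆ (insert a U).subsetSum.image f := by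
  have hpair : ({0, a} : Finset G) ⊆ ({a} : Finset G).subsetSum := by
    simp [Finset.insert_subset_iff, Finset.subset_subsetSum]
  calc {0, f a} + U.subsetSum.image f
      = ({0, a} + U.subsetSum).image f := by simp [Finset.image_add, Finset.image_insert]
    _ ⊆ (insert a U).subsetSum.image f := by
        rw [Finset.insert_eq a U]
        grw [hpair, subsetSum_add_subset_subsetSum_union (Finset.disjoint_singleton_left.2 ha)]

lemma restrictedSums_subset_subsetSum (j : ℕ) (A : Finset G) :
    restrictedSums j A ⊆ A.subsetSum := fun _ hg ↦
  have ⟨S, hS, _, hsum⟩ := mem_restrictedSums.1 hg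
  Finset.mem_subsetSum_iff.2 ⟨S, hS, hsum⟩

lemma image_restrictedSums (f : G →+ H) {A : Finset G} (hf : Set.InjOn f A) (j : ℕ) :
    (restrictedSums j A).image f = restrictedSums j (A.image f) := by
  have himage : ∀ S ⊆ A, ∑ y ∈ S.image f, y = f (∑ x ∈ S, x) ∧ #(S.image f) = #S := fun S hS ↦
    have hfS : Set.InjOn f S := hf.mono (Finset.coe_subset.2 hS)
    ⟨by rw [Finset.sum_image hfS, map_sum], Finset.card_image_of_injOn hfS⟩
  ext g
  simp only [Finset.mem_image, mem_restrictedSums]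
  constructor
  · rintro ⟨_, ⟨S, hS, hcard, rfl⟩, rfl⟩
    exact ⟨S.image f, Finset.image_subset_image hS, (himage S hS).2.trans hcard, (himage S hS).1⟩
  · rintro ⟨T, hT, hcard, rfl⟩
    obtain ⟨S, hS, rfl⟩ := Finset.subset_image_iff.1 hT
    exact ⟨_, ⟨S, hS, (himage S hS).2.symm.trans hcard, rfl⟩, (himage S hS).1.symm⟩

end SubsetSums

section Fibers

lemma exists_subset_injOn_card_eq {α K : Type*} [DecidableEq K] (f : α → K) {U : Finset α}
    {n h : ℕ} (hfib : ∀ c, #{a ∈ U | f a = c} ≤ h) (hU : (n - 1) * h + n ≤ #U) :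
    ∃ D ⊆ U, Set.InjOn f D ∧ #D = n := by
  have himage : n ≤ #(U.image f) := by
    by_contra! hlt
    have hle : h * #(U.image f) ≤ (n - 1) * h := by
      rw [mul_comm]
      exact Nat.mul_le_mul_right h (by lia)
    have := Finset.card_le_mul_card_image U h fun c _ ↦ hfib c
    lia
  obtain ⟨T, hT, rfl⟩ := Finset.exists_subset_card_eq himage
  obtain ⟨D, hDU, hinj, rfl⟩ := Finset.exists_subset_injOn_image_eq_of_surjOn (f := f)
    (s := U) T fun c hc ↦ Finset.mem_image.1 (hT hc)
  exact ⟨D, hDU, hinj, (Finset.card_image_of_injOn hinj).symm⟩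

variable {G H : Type*} [DecidableEq G]

/-- The fiber of `B` over `c` under the first projection. Its elements keep both coordinates, so
that fibers are subsets of `B`. -/
def fiber (B : Finset (G × H)) (c : G) : Finset (G × H) := {a ∈ B | a.1 = c}

lemma mem_fiber {B : Finset (G × H)} {c : G} {a : G × H} : a ∈ fiber B c ↔ a ∈ B ∧ a.1 = c :=
  Finset.mem_filter

lemma fiber_subset (B : Finset (G × H)) (c : G) : fiber B c ⊆ B := Finset.filter_subset _ _

lemma fiber_mono {B C : Finset (G × H)} (h : B ⊆ C) (c : G) : fiber B c ⊆ fiber C c :=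
  Finset.filter_subset_filter _ h

lemma injOn_snd_fiber (B : Finset (G × H)) (c : G) : Set.InjOn Prod.snd (fiber B c : Set (G × H)) :=
  fun _ ha _ hb hab ↦ Prod.ext ((mem_fiber.1 ha).2.trans (mem_fiber.1 hb).2.symm) hab

variable [AddCommMonoid G] [AddCommMonoid H]

lemma fst_sum_of_subset_fiber {B S : Finset (G × H)} {c : G} (hS : S ⊆ fiber B c) :
    (∑ a ∈ S, a).1 = #S • c := by
  rw [Prod.fst_sum, Finset.sum_congr rfl fun a ha ↦ (mem_fiber.1 (hS ha)).2, Finset.sum_const]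

variable [DecidableEq H]

/-- The second coordinates of the subset sums of `U` whose first coordinate is `c`. These sets grow
under disjoint unions of the `U`, which is how Cauchy–Davenport is applied. -/
def sumsOver (U : Finset (G × H)) (c : G) : Finset H := (fiber U.subsetSum c).image Prod.snd

lemma mem_sumsOver {U : Finset (G × H)} {c : G} {y : H} :
    y ∈ sumsOver U c ↔ (c, y) ∈ U.subsetSum := by
  simp [sumsOver, mem_fiber]

lemma sumsOver_mono {U W : Finset (G × H)} (h : U ⊆ W) (c : G) : sumsOver U c ⊆ sumsOver W c :=
  Finset.image_subset_image (fiber_mono (Finset.subsetSum_mono h) c)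

lemma sumsOver_add_subset_sumsOver_union {U W : Finset (G × H)} (hUW : Disjoint U W) (c d : G) :
    sumsOver U c + sumsOver W d ⊆ sumsOver (U ∪ W) (c + d) :=
  Finset.add_subset_iff.2 fun _ hy _ hz ↦ mem_sumsOver.2 <|
    add_mem_subsetSum_union hUW (mem_sumsOver.1 hy) (mem_sumsOver.1 hz)

lemma image_snd_restrictedSums_fiber_subset_sumsOver (B : Finset (G × H)) (c : G) (j : ℕ) :
    (restrictedSums j (fiber B c)).image Prod.snd ⊆ sumsOver (fiber B c) (j • c) := by
  refine Finset.image_subset_iff.2 fun g hg ↦ ?_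
  have hsub := restrictedSums_subset_subsetSum j _ hg
  obtain ⟨S, hS, rfl, rfl⟩ := mem_restrictedSums.1 hg
  rwa [mem_sumsOver, ← fst_sum_of_subset_fiber hS]

end Fibers

section AdditionTheorems

lemma eq_univ_of_min_le_card {p : ℕ} [NeZero p] {X : Finset (ZMod p)} {m : ℕ}
    (hX : min p m ≤ #X) (hm : p ≤ m) : X = Finset.univ :=
  (Finset.card_eq_iff_eq_univ X).1 <| (Finset.card_le_univ X).antisymm <|
    (ZMod.card p).trans_le <| (le_min le_rfl hm).trans hX

variable {p : ℕ} [hp : Fact p.Prime]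

lemma min_add_add_one_le_card_add {X Y : Finset (ZMod p)} {a b : ℕ}
    (hX : min p (a + 1) ≤ #X) (hY : min p (b + 1) ≤ #Y) : min p (a + b + 1) ≤ #(X + Y) := by
  have := hp.out.pos
  have := ZMod.cauchy_davenport hp.out (Finset.card_pos.1 (by lia) : X.Nonempty)
    (Finset.card_pos.1 (by lia) : Y.Nonempty)
  lia

variable {G : Type*} [AddCommMonoid G] [DecidableEq G]

lemma min_le_card_image_restrictedSums (f : G →+ ZMod p) {A : Finset G} (hf : Set.InjOn f A)
    {j : ℕ} (hj : j ≤ #A) : min p (j * (#A - j) + 1) ≤ #((restrictedSums j A).image f) := by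
  rw [← Finset.card_image_of_injOn hf] at hj ⊢
  rw [image_restrictedSums f hf]
  exact dias_da_silva_hamidoune hj

lemma min_le_card_image_subsetSum (f : G →+ ZMod p) {U : Finset G} (hU : ∀ a ∈ U, f a ≠ 0) :
    min p (#U + 1) ≤ #(U.subsetSum.image f) := by
  induction U using Finset.induction_on with
  | empty => exact (min_le_right _ _).trans (Finset.subsetSum_nonempty.image f).card_pos
  | insert a U ha ih =>
    have hpair : min p (1 + 1) ≤ #({0, f a} : Finset (ZMod p)) := by
      rw [Finset.card_pair (hU a (Finset.mem_insert_self a U)).symm]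
      exact min_le_right _ _
    rw [Finset.card_insert_of_notMem ha, add_comm (#U) 1]
    grw [min_add_add_one_le_card_add hpair (ih fun b hb ↦ hU b (Finset.mem_insert_of_mem hb)),
      pair_add_image_subsetSum_subset f ha]

/-- The intervals of length `#U` let every `a ∈ U` contribute `{0, f a} + {0, 1}`, which has four
elements. -/
lemma min_le_card_image_subsetSum_add_image_range (f : G →+ ZMod p) {U : Finset G}
    (hU : ∀ a ∈ U, f a ≠ 0 ∧ f a ≠ 1 ∧ f a ≠ -1) :
    min p (3 * #U + 1) ≤ #(U.subsetSum.image f + (Finset.range (#U + 1)).image Nat.cast) := by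
  induction U using Finset.induction_on with
  | empty =>
    exact (min_le_right _ _).trans ((Finset.subsetSum_nonempty.image f).add (by simp)).card_pos
  | insert a U ha ih =>
    obtain ⟨h0, h1, hneg⟩ := hU a (Finset.mem_insert_self a U)
    have hsquare : #(({0, f a} : Finset (ZMod p)) + {0, 1}) = 3 + 1 := by
      have hadd : ({0, f a} : Finset (ZMod p)) + {0, 1} = {0, 1, f a, f a + 1} := by
        ext x
        simp [Finset.mem_add, eq_comm, or_assoc]
      rw [hadd]
      grind
    have hrange : ({0, 1} : Finset (ZMod p)) + (Finset.range (#U + 1)).image Nat.cast ⊆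
        (Finset.range (#U + 1 + 1)).image Nat.cast := by
      simp only [Finset.add_subset_iff, Finset.forall_mem_image, Finset.forall_mem_insert,
        Finset.mem_singleton, forall_eq, Finset.mem_range, zero_add, ← Nat.cast_one_add]
      exact ⟨fun i hi ↦ Finset.mem_image_of_mem _ (Finset.mem_range.2 (by lia)),
        fun i hi ↦ Finset.mem_image_of_mem _ (Finset.mem_range.2 (by lia))⟩
    have hstep := min_add_add_one_le_card_add ((min_le_right p _).trans_eq hsquare.symm)
      (ih fun b hb ↦ hU b (Finset.mem_insert_of_mem hb))
    rw [add_add_add_comm] at hstep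
    rw [Finset.card_insert_of_notMem ha, mul_add, mul_one, add_comm (3 * #U)]
    grw [hstep, pair_add_image_subsetSum_subset f ha, hrange]

lemma min_le_card_sumsOver_fiber {B : Finset (G × ZMod p)} {c : G} {j : ℕ}
    (hj : j ≤ #(fiber B c)) :
    min p (j * (#(fiber B c) - j) + 1) ≤ #(sumsOver (fiber B c) (j • c)) := by
  grw [← image_snd_restrictedSums_fiber_subset_sumsOver]
  exact min_le_card_image_restrictedSums (AddMonoidHom.snd G (ZMod p)) (injOn_snd_fiber B c) hj

lemma min_sum_le_card_sumsOver {B : Finset (G × ZMod p)} {C : Finset G} {j : G → ℕ}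
    (hj : ∀ c ∈ C, j c ≤ #(fiber B c)) :
    min p (∑ c ∈ C, j c * (#(fiber B c) - j c) + 1) ≤
      #(sumsOver {a ∈ B | a.1 ∈ C} (∑ c ∈ C, j c • c)) := by
  induction C using Finset.induction_on with
  | empty =>
    exact (min_le_right _ _).trans (Finset.card_pos.2 ⟨0, mem_sumsOver.2 Finset.zero_mem_subsetSum⟩)
  | insert d C hd ih =>
    have hdisj : Disjoint (fiber B d) {a ∈ B | a.1 ∈ C} := by
      refine Finset.disjoint_left.2 fun a had haC ↦ hd ?_
      exact (mem_fiber.1 had).2 ▸ (Finset.mem_filter.1 haC).2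
    have hunion : fiber B d ∪ {a ∈ B | a.1 ∈ C} = {a ∈ B | a.1 ∈ insert d C} := by
      simp only [fiber, Finset.mem_insert, Finset.filter_or]
    rw [Finset.sum_insert hd, Finset.sum_insert hd, ← hunion]
    grw [← sumsOver_add_subset_sumsOver_union hdisj]
    exact min_add_add_one_le_card_add (min_le_card_sumsOver_fiber (hj d (by simp)))
      (ih fun c hc ↦ hj c (by simp [hc]))

/-- Repeatedly split off `n` elements with distinct images and apply the Dias da Silva–Hamidoune
theorem to each group. -/
lemma exists_subset_card_eq_min_le_card_image_subsetSum (f : G →+ ZMod p) {U : Finset G}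
    {n h j : ℕ} (hj : j ≤ n) (hfib : ∀ c, #{a ∈ U | f a = c} ≤ h) (N : ℕ)
    (hU : (n - 1) * h + n * N ≤ #U) :
    ∃ W ⊆ U, #W = n * N ∧ min p (j * (n - j) * N + 1) ≤ #(W.subsetSum.image f) := by
  induction N with
  | zero =>
    exact ⟨∅, by simp, by simp,
      (min_le_right _ _).trans (Finset.subsetSum_nonempty.image f).card_pos⟩
  | succ N ih =>
    rw [mul_add_one] at hU
    obtain ⟨W, hWU, hWcard, hW⟩ := ih (by lia)
    obtain ⟨D, hD, hinj, rfl⟩ := exists_subset_injOn_card_eq f (U := U \ W) (n := n) (h := h)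
      (fun c ↦ (Finset.card_le_card (Finset.filter_subset_filter _ Finset.sdiff_subset)).trans
        (hfib c)) (by rw [Finset.card_sdiff_of_subset hWU]; lia)
    have hDW : Disjoint D W := Finset.disjoint_of_subset_left hD Finset.sdiff_disjoint
    refine ⟨D ∪ W, Finset.union_subset (hD.trans Finset.sdiff_subset) hWU, ?_, ?_⟩
    · rw [Finset.card_union_of_disjoint hDW, hWcard, mul_add_one, add_comm]
    · have hstep := min_add_add_one_le_card_add (min_le_card_image_restrictedSums f hinj hj) hW
      rw [mul_add_one, add_comm (_ * N)]
      grw [hstep, restrictedSums_subset_subsetSum, ← Finset.image_add,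
        subsetSum_add_subset_subsetSum_union hDW]

end AdditionTheorems

section FiberSizes

lemma sum_Icc_neg_natCast_succ {M : Type*} [AddCommMonoid M] (f : ℤ → M) (n : ℕ) :
    ∑ c ∈ Finset.Icc (-((n + 1 : ℕ) : ℤ)) (n + 1 : ℕ), f c =
      f (n + 1) + (f (-(n + 1)) + ∑ c ∈ Finset.Icc (-(n : ℤ)) n, f c) := by
  have hIcc : Finset.Icc (-((n + 1 : ℕ) : ℤ)) ((n + 1 : ℕ) : ℤ) =
      insert ((n : ℤ) + 1) (insert (-((n : ℤ) + 1)) (Finset.Icc (-(n : ℤ)) n)) := by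
    ext x
    simp only [Finset.mem_Icc, Finset.mem_insert]
    lia
  rw [hIcc, Finset.sum_insert (by simp; lia), Finset.sum_insert (by simp)]

lemma sum_Icc_neg_natCast_sq (n : ℕ) :
    ∑ c ∈ Finset.Icc (-(n : ℤ)) n, (c : ℝ) ^ 2 = n * (n + 1) * (2 * n + 1) / 3 := by
  induction n with
  | zero => simp
  | succ n ih =>
    rw [sum_Icc_neg_natCast_succ fun c ↦ (c : ℝ) ^ 2, ih]
    push_cast
    ring

lemma sum_Icc_neg_natCast_pow_four (n : ℕ) :
    ∑ c ∈ Finset.Icc (-(n : ℤ)) n, (c : ℝ) ^ 4 =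
      n * (n + 1) * (2 * n + 1) * (3 * n ^ 2 + 3 * n - 1) / 15 := by
  induction n with
  | zero => simp
  | succ n ih =>
    rw [sum_Icc_neg_natCast_succ fun c ↦ (c : ℝ) ^ 4, ih]
    push_cast
    ring

lemma sum_Icc_one_sub_div_sq_sq_le {r : ℕ} (hr : 0 < r) :
    ∑ c ∈ Finset.Icc (-(r : ℤ)) r, (1 - (c : ℝ) ^ 2 / r ^ 2) ^ 2 ≤ (16 * r / 15 : ℝ) := by
  have hexpand (c : ℤ) : (1 - (c : ℝ) ^ 2 / r ^ 2) ^ 2 =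
      1 - 2 / r ^ 2 * (c : ℝ) ^ 2 + 1 / r ^ 4 * (c : ℝ) ^ 4 := by
    field_simp
    ring
  have hcard : (#(Finset.Icc (-(r : ℤ)) r) : ℝ) = 2 * r + 1 := by
    rw [Int.card_Icc, show ((r : ℤ) + 1 - -r).toNat = 2 * r + 1 by lia]
    push_cast
    rfl
  calc ∑ c ∈ Finset.Icc (-(r : ℤ)) r, (1 - (c : ℝ) ^ 2 / r ^ 2) ^ 2
      = (16 * r / 15 - 1 / (15 * r ^ 3) : ℝ) := by
        simp_rw [hexpand]
        rw [Finset.sum_add_distrib, Finset.sum_sub_distrib, ← Finset.mul_sum, ← Finset.mul_sum,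
          sum_Icc_neg_natCast_sq, sum_Icc_neg_natCast_pow_four, Finset.sum_const, nsmul_one, hcard]
        field_simp
        ring
    _ ≤ (16 * r / 15 : ℝ) := sub_le_self _ (by positivity)

lemma sq_le_four_mul_half_mul_sub_half (m : ℕ) : m ^ 2 ≤ 4 * (m / 2 * (m - m / 2)) + 1 := by
  obtain ⟨k, rfl | rfl⟩ := m.even_or_odd'
  · rw [show 2 * k / 2 = k by lia, show 2 * k - k = k by lia]
    nlinarith
  · rw [show (2 * k + 1) / 2 = k by lia, show 2 * k + 1 - k = k + 1 by lia]
    nlinarith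

/-- The parabola `1 - v ^ 2 / r ^ 2`, cut off where it is negative, is the extremal profile for the
fiber sizes with a given second moment. -/
lemma two_mul_mul_one_sub_le {r : ℕ} (hr : 0 < r) {l : ℝ} (hl : 0 ≤ l) (m : ℕ) (v : ℤ) :
    2 * l * (m * (1 - (v : ℝ) ^ 2 / r ^ 2)) ≤ 4 * (m / 2 * (m - m / 2) : ℕ) +
      if v ∈ Finset.Icc (-(r : ℤ)) r then l ^ 2 * (1 - (v : ℝ) ^ 2 / r ^ 2) ^ 2 + 1 else 0 := by
  have hhalf : (m : ℝ) ^ 2 ≤ 4 * (m / 2 * (m - m / 2) : ℕ) + 1 :=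
    mod_cast sq_le_four_mul_half_mul_sub_half m
  split_ifs with hv
  · linarith [sq_nonneg ((m : ℝ) - l * (1 - (v : ℝ) ^ 2 / r ^ 2))]
  · have hrv : (r : ℝ) ^ 2 ≤ (v : ℝ) ^ 2 := by
      rw [sq_le_sq, Nat.abs_cast, ← Int.cast_abs]
      rw [Finset.mem_Icc, ← abs_le, not_le] at hv
      exact_mod_cast hv.le
    have hneg : 1 - (v : ℝ) ^ 2 / r ^ 2 ≤ 0 := sub_nonpos.2 ((one_le_div (by positivity)).2 hrv)
    have := mul_nonpos_of_nonneg_of_nonpos (by positivity : 0 ≤ 2 * l * m) hneg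
    have : (0 : ℝ) ≤ 4 * (m / 2 * (m - m / 2) : ℕ) := by positivity
    linarith

lemma two_mul_sum_mul_one_sub_le {ι : Type*} [Fintype ι] {v : ι → ℤ} (hv : Function.Injective v)
    (m : ι → ℕ) {r : ℕ} (hr : 0 < r) {l : ℝ} (hl : 0 ≤ l) :
    2 * l * ∑ i, m i * (1 - (v i : ℝ) ^ 2 / r ^ 2) ≤
      4 * (∑ i, m i / 2 * (m i - m i / 2) : ℕ) + (16 * l ^ 2 / 15 + 2) * r + 1 := by
  let w : ℤ → ℝ := fun c ↦ l ^ 2 * (1 - (c : ℝ) ^ 2 / r ^ 2) ^ 2 + 1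
  have hw : ∑ i, (if v i ∈ Finset.Icc (-(r : ℤ)) r then w (v i) else 0) ≤
      (16 * l ^ 2 / 15 + 2) * r + 1 := by
    calc ∑ i, (if v i ∈ Finset.Icc (-(r : ℤ)) r then w (v i) else 0)
        = ∑ c ∈ ({i | v i ∈ Finset.Icc (-(r : ℤ)) r} : Finset ι).image v, w c := by
          rw [← Finset.sum_filter, Finset.sum_image hv.injOn]
      _ ≤ ∑ c ∈ Finset.Icc (-(r : ℤ)) r, w c := by
          refine Finset.sum_le_sum_of_subset_of_nonneg ?_ fun c _ _ ↦ by positivity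
          simp [Finset.image_subset_iff]
      _ = l ^ 2 * ∑ c ∈ Finset.Icc (-(r : ℤ)) r, (1 - (c : ℝ) ^ 2 / r ^ 2) ^ 2 + (2 * r + 1) := by
          rw [Finset.sum_add_distrib, Finset.mul_sum, Finset.sum_const, Int.card_Icc,
            show ((r : ℤ) + 1 - -r).toNat = 2 * r + 1 by lia]
          simp
      _ ≤ (16 * l ^ 2 / 15 + 2) * r + 1 := by
          grw [sum_Icc_one_sub_div_sq_sq_le hr]
          linarith
  rw [Finset.mul_sum]
  grw [Finset.sum_le_sum fun i _ ↦ two_mul_mul_one_sub_le hr hl (m i) (v i)]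
  rw [Finset.sum_add_distrib, ← Finset.mul_sum, ← Nat.cast_sum]
  linarith

lemma sum_card_fiber_mul {G H R : Type*} [Fintype G] [DecidableEq G] [Semiring R]
    (U : Finset (G × H)) (f : G → R) :
    ∑ c, #(fiber U c) * f c = ∑ a ∈ U, f a.1 := by
  rw [← Finset.sum_fiberwise U Prod.fst]
  refine Finset.sum_congr rfl fun c _ ↦ ?_
  rw [Finset.sum_congr rfl fun a ha ↦ by rw [(Finset.mem_filter.1 ha).2], Finset.sum_const,
    nsmul_eq_mul, fiber]

lemma le_sum_half_card_fiber_mul {p : ℕ} [NeZero p] (hp6000 : 6000 < p) {H : Type*}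
    {U : Finset (ZMod p × H)}
    (hU : 4 * p ≤ 5 * #U + 100)
    (hvar : ∑ a ∈ U, (a.1.valMinAbs : ℝ) ^ 2 ≤ (p : ℝ) ^ 3 / 1230) :
    p ≤ ∑ c, #(fiber U c) / 2 * (#(fiber U c) - #(fiber U c) / 2) + 1 := by
  obtain ⟨r, hr⟩ : ∃ r, r = 3 * p / 50 := ⟨_, rfl⟩
  have hr_le : (50 : ℝ) * r ≤ 3 * p := mod_cast (by lia : 50 * r ≤ 3 * p)
  have hle_r : (3 : ℝ) * p ≤ 50 * r + 50 := mod_cast (by lia : 3 * p ≤ 50 * r + 50)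
  have hpR : (6000 : ℝ) < p := mod_cast hp6000
  have hUR : (4 : ℝ) * p ≤ 5 * #U + 100 := mod_cast hU
  have hr0 : (0 : ℝ) < r := by linarith
  have hquad := two_mul_sum_mul_one_sub_le (ZMod.injective_valMinAbs (n := p))
    (fun c ↦ #(fiber U c)) (r := r) (by lia) (by norm_num : (0 : ℝ) ≤ 10)
  rw [sum_card_fiber_mul U fun c ↦ 1 - (c.valMinAbs : ℝ) ^ 2 / r ^ 2, Finset.sum_sub_distrib,
    Finset.sum_const, nsmul_one, ← Finset.sum_div] at hquad
  have hdiv : (∑ a ∈ U, (a.1.valMinAbs : ℝ) ^ 2) / r ^ 2 ≤ 0.228 * p := by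
    have hrp : (0.0598 * p) ^ 2 ≤ (r : ℝ) ^ 2 := by gcongr; linarith
    have hmul := mul_le_mul_of_nonneg_left hrp (by positivity : (0 : ℝ) ≤ p)
    rw [div_le_iff₀ (by positivity)]
    nlinarith [(by positivity : (0 : ℝ) ≤ (p : ℝ) ^ 3)]
  by_contra! hlt
  have hltR : ((∑ c, #(fiber U c) / 2 * (#(fiber U c) - #(fiber U c) / 2) : ℕ) : ℝ) + 1 < p :=
    mod_cast hlt
  linarith

end FiberSizes

section FourierAnalysis

lemma cos_le_exp_neg_half_sq {x : ℝ} (hx : |x| ≤ Real.pi / 2) :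
    Real.cos x ≤ Real.exp (-(x ^ 2 / 2)) := by
  have hderiv (y : ℝ) : HasDerivAt (fun y ↦ Real.cos y * Real.exp (y ^ 2 / 2))
      (Real.exp (y ^ 2 / 2) * (y * Real.cos y - Real.sin y)) y := by
    have hsq : HasDerivAt (fun y : ℝ ↦ y ^ 2 / 2) y y := by
      simpa using (hasDerivAt_pow 2 y).div_const 2
    exact ((Real.hasDerivAt_cos y).mul hsq.exp).congr_deriv (by ring)
  have hanti : AntitoneOn (fun y ↦ Real.cos y * Real.exp (y ^ 2 / 2))
      (Set.Icc 0 (Real.pi / 2)) := by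
    refine antitoneOn_of_hasDerivWithinAt_nonpos (convex_Icc _ _)
      (fun y _ ↦ (hderiv y).continuousAt.continuousWithinAt)
      (fun y _ ↦ (hderiv y).hasDerivWithinAt) fun y hy ↦ ?_
    rw [interior_Icc] at hy
    have hcos : 0 < Real.cos y := Real.cos_pos_of_mem_Ioo ⟨by linarith [hy.1, Real.pi_pos], hy.2⟩
    have htan := Real.lt_tan hy.1 hy.2
    rw [Real.tan_eq_sin_div_cos, lt_div_iff₀ hcos] at htan
    exact mul_nonpos_of_nonneg_of_nonpos (Real.exp_pos _).le (by linarith)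
  have hle := hanti ⟨le_rfl, by positivity⟩ ⟨abs_nonneg x, hx⟩ (abs_nonneg x)
  rw [Real.exp_neg, ← one_div, le_div_iff₀ (Real.exp_pos _)]
  simpa using hle

lemma norm_one_add_exp_mul_I (θ : ℝ) :
    ‖1 + Complex.exp (Complex.I * θ)‖ = 2 * |Real.cos (θ / 2)| := by
  have hshift : Complex.exp (Complex.I * (θ + Real.pi : ℝ)) - 1 =
      -(1 + Complex.exp (Complex.I * θ)) := by
    rw [Complex.ofReal_add, mul_add, Complex.exp_add, mul_comm Complex.I (Real.pi : ℂ),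
      Complex.exp_pi_mul_I]
    ring
  rw [← norm_neg, ← hshift, Complex.norm_exp_I_mul_ofReal_sub_one, norm_mul, add_div,
    Real.sin_add_pi_div_two, Real.norm_ofNat, Real.norm_eq_abs]

lemma norm_one_add_stdAddChar_le {n : ℕ} [NeZero n] (t : ZMod n) :
    ‖1 + ZMod.stdAddChar t‖ ≤
      2 * Real.exp (-(Real.pi ^ 2 / (2 * n ^ 2) * (t.valMinAbs : ℝ) ^ 2)) := by
  have hn : (0 : ℝ) < n := mod_cast NeZero.pos n
  have habs : |Real.pi * t.valMinAbs / n| ≤ Real.pi / 2 := by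
    have hval : (2 : ℝ) * |(t.valMinAbs : ℝ)| ≤ n := by
      rw [← Int.cast_abs, Int.abs_eq_natAbs]
      exact_mod_cast (by have := t.natAbs_valMinAbs_le; lia : 2 * t.valMinAbs.natAbs ≤ n)
    rw [abs_div, abs_mul, abs_of_pos Real.pi_pos, Nat.abs_cast, div_le_iff₀ hn]
    nlinarith [Real.pi_pos]
  have hcos := Real.cos_nonneg_of_mem_Icc (abs_le.1 habs)
  have hexp : ZMod.stdAddChar t =
      Complex.exp (Complex.I * (2 * Real.pi * t.valMinAbs / n : ℝ)) := by
    conv_lhs => rw [← ZMod.coe_valMinAbs t, ZMod.stdAddChar_coe]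
    push_cast
    ring_nf
  rw [hexp, norm_one_add_exp_mul_I,
    show 2 * Real.pi * t.valMinAbs / n / 2 = Real.pi * t.valMinAbs / n by ring, abs_of_nonneg hcos]
  grw [cos_le_exp_neg_half_sq habs]
  rw [show (Real.pi * t.valMinAbs / n) ^ 2 / 2 =
    Real.pi ^ 2 / (2 * n ^ 2) * (t.valMinAbs : ℝ) ^ 2 by ring]

variable {G : Type*} [AddCommGroup G]

lemma exists_addMonoidHom_eq_stdAddChar {n : ℕ} [NeZero n] (hG : ∀ a : G, n • a = 0)
    (ψ : AddChar G ℂ) : ∃ φ : G →+ ZMod n, ∀ a, ψ a = ZMod.stdAddChar (φ a) := by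
  have hroot (a : G) : ∃ t : ZMod n, ψ a = ZMod.stdAddChar t := by
    have hpow : ψ a ^ n = 1 := by rw [← AddChar.map_nsmul_eq_pow, hG, AddChar.map_zero_eq_one]
    obtain ⟨i, -, hi⟩ := (Complex.mem_rootsOfUnity n (Units.ofPowEqOne _ n hpow (NeZero.ne n))).1
      (rootsOfUnity.mkOfPowEq _ hpow).2
    refine ⟨(i : ℤ), ?_⟩
    rw [ZMod.stdAddChar_coe, ← Units.val_ofPowEqOne (ψ a) n hpow (NeZero.ne n), ← hi]
    push_cast
    ring_nf
  choose φ hφ using hroot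
  refine ⟨AddMonoidHom.mk' φ fun a b ↦ ZMod.injective_stdAddChar ?_, hφ⟩
  rw [AddChar.map_add_eq_mul, ← hφ, ← hφ, ← hφ, AddChar.map_add_eq_mul]

variable [Fintype G] [DecidableEq G]

lemma sum_addChar_prod_one_add (B : Finset G) :
    ∑ ψ : AddChar G ℂ, ∏ a ∈ B, (1 + ψ a) =
      Fintype.card G * #{S ∈ B.powerset | ∑ a ∈ S, a = 0} := by
  have hprod (ψ : AddChar G ℂ) (S : Finset G) : ∏ a ∈ S, ψ a = ψ (∑ a ∈ S, a) := by
    induction S using Finset.induction_on with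
    | empty => simp
    | insert a S ha ih =>
      rw [Finset.prod_insert ha, Finset.sum_insert ha, ih, AddChar.map_add_eq_mul]
  simp_rw [Finset.prod_one_add, hprod]
  rw [Finset.sum_comm]
  simp_rw [AddChar.sum_apply_eq_ite]
  rw [← Finset.sum_filter, Finset.sum_const, nsmul_eq_mul, mul_comm]

lemma exists_ne_zero_le_norm_prod_one_add {B : Finset G} {N : ℕ}
    (hB : #{S ∈ B.powerset | ∑ a ∈ S, a = 0} ≤ N) (hN : N * Fintype.card G ^ 2 < 2 ^ #B) :
    ∃ ψ : AddChar G ℂ, ψ ≠ 0 ∧ 2 ^ #B / Fintype.card G ≤ ‖∏ a ∈ B, (1 + ψ a)‖ := by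
  by_contra! hsmall
  have hG : (0 : ℝ) < Fintype.card G := mod_cast Fintype.card_pos
  have hBR : (#{S ∈ B.powerset | ∑ a ∈ S, a = 0} : ℝ) ≤ N := mod_cast hB
  have hNR : (N * Fintype.card G ^ 2 : ℝ) < 2 ^ #B := mod_cast hN
  have hzero : ∏ a ∈ B, (1 + (0 : AddChar G ℂ) a) = 2 ^ #B := by norm_num
  have hsum := sum_addChar_prod_one_add B
  rw [← Finset.add_sum_erase _ _ (Finset.mem_univ 0), hzero, ← eq_sub_iff_add_eq] at hsum
  have herase : ∑ ψ ∈ Finset.univ.erase (0 : AddChar G ℂ), ‖∏ a ∈ B, (1 + ψ a)‖ ≤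
      2 ^ #B - 2 ^ #B / Fintype.card G := by
    refine (Finset.sum_le_card_nsmul _ _ _ fun ψ hψ ↦
      (hsmall ψ (Finset.ne_of_mem_erase hψ)).le).trans_eq ?_
    rw [nsmul_eq_mul, Finset.card_erase_of_mem (Finset.mem_univ _), Finset.card_univ,
      AddChar.card_eq, Nat.cast_pred Fintype.card_pos]
    field_simp
  have hle : (2 : ℝ) ^ #B ≤ Fintype.card G * N + (2 ^ #B - 2 ^ #B / Fintype.card G) := by
    calc (2 : ℝ) ^ #B = ‖(2 : ℂ) ^ #B‖ := by simp
      _ ≤ ‖(Fintype.card G * #{S ∈ B.powerset | ∑ a ∈ S, a = 0} : ℂ)‖ +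
          ∑ ψ ∈ Finset.univ.erase (0 : AddChar G ℂ), ‖∏ a ∈ B, (1 + ψ a)‖ := by
        rw [hsum]
        grw [norm_sub_le, norm_sum_le]
      _ ≤ _ := by
        grw [herase]
        rw [norm_mul, Complex.norm_natCast, Complex.norm_natCast]
        grw [hBR]
  have hdiv : (2 : ℝ) ^ #B / Fintype.card G ≤ Fintype.card G * N := by linarith
  rw [div_le_iff₀ hG] at hdiv
  linarith

lemma exists_ne_zero_sum_valMinAbs_sq_le {n : ℕ} [NeZero n] (hG : ∀ a : G, n • a = 0)
    {B : Finset G} {N : ℕ} (hB : #{S ∈ B.powerset | ∑ a ∈ S, a = 0} ≤ N)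
    (hN : N * Fintype.card G ^ 2 < 2 ^ #B) :
    ∃ φ : G →+ ZMod n, φ ≠ 0 ∧ Real.pi ^ 2 / (2 * n ^ 2) * ∑ a ∈ B, ((φ a).valMinAbs : ℝ) ^ 2 ≤
      Real.log (Fintype.card G) := by
  have : (0 : ℝ) < Fintype.card G := mod_cast Fintype.card_pos
  obtain ⟨ψ, hψ, hle⟩ := exists_ne_zero_le_norm_prod_one_add hB hN
  obtain ⟨φ, hφ⟩ := exists_addMonoidHom_eq_stdAddChar hG ψ
  refine ⟨φ, ?_, ?_⟩
  · rintro rfl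
    exact hψ (by ext a; simp [hφ])
  have hprod : ‖∏ a ∈ B, (1 + ψ a)‖ ≤ 2 ^ #B *
      Real.exp (-(Real.pi ^ 2 / (2 * n ^ 2) * ∑ a ∈ B, ((φ a).valMinAbs : ℝ) ^ 2)) := by
    rw [norm_prod, Finset.mul_sum, ← Finset.sum_neg_distrib, Real.exp_sum, ← Finset.prod_const,
      ← Finset.prod_mul_distrib]
    exact Finset.prod_le_prod (fun _ _ ↦ norm_nonneg _)
      fun a _ ↦ hφ a ▸ norm_one_add_stdAddChar_le (φ a)
  have hexp : (Fintype.card G : ℝ)⁻¹ ≤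
      Real.exp (-(Real.pi ^ 2 / (2 * n ^ 2) * ∑ a ∈ B, ((φ a).valMinAbs : ℝ) ^ 2)) := by
    rw [div_eq_mul_inv] at hle
    exact le_of_mul_le_mul_left (hle.trans hprod) (by positivity)
  rw [← Real.log_le_iff_le_exp (by positivity), Real.log_inv] at hexp
  exact neg_le_neg_iff.1 hexp

lemma log_le_div_five_hundred {x : ℝ} (hx : 6000 ≤ x) : Real.log x ≤ x / 500 := by
  have hlog : Real.log (x / 2 ^ 10) ≤ x / 2 ^ 10 - 1 := Real.log_le_sub_one_of_pos (by positivity)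
  rw [Real.log_div (by positivity) (by norm_num), Real.log_pow] at hlog
  norm_num at hlog
  linarith [Real.log_two_lt_d9]

lemma two_mul_pow_four_lt_two_pow {n : ℕ} (hn : 18 ≤ n) : 2 * n ^ 4 < 2 ^ n := by
  induction n, hn using Nat.le_induction with
  | base => norm_num
  | succ n hn ih =>
    have hstep : (n + 1) ^ 4 ≤ 2 * n ^ 4 := by
      calc (n + 1) ^ 4 = n ^ 4 + 4 * n ^ 3 + 6 * n ^ 2 + 4 * n + 1 := by ring
        _ ≤ n ^ 4 + n ^ 4 := by nlinarith [pow_pos (by lia : 0 < n) 3, pow_pos (by lia : 0 < n) 2]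
        _ = 2 * n ^ 4 := by ring
    rw [pow_succ 2 n]
    lia

lemma exists_ne_zero_sum_valMinAbs_sq_le_cube {p : ℕ} [NeZero p] (hp : 6000 < p)
    {B : Finset (ZMod p × ZMod p)} (hpB : p ≤ #B)
    (hB : #{S ∈ B.powerset | ∑ a ∈ S, a = 0} ≤ 2) :
    ∃ φ : ZMod p × ZMod p →+ ZMod p, φ ≠ 0 ∧
      ∑ a ∈ B, ((φ a).valMinAbs : ℝ) ^ 2 ≤ (p : ℝ) ^ 3 / 1230 := by
  have hpR : (6000 : ℝ) < p := mod_cast hp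
  have hcard : Fintype.card (ZMod p × ZMod p) = p ^ 2 := by simp [sq]
  have htwo : 2 * Fintype.card (ZMod p × ZMod p) ^ 2 < 2 ^ #B := by
    calc 2 * Fintype.card (ZMod p × ZMod p) ^ 2 = 2 * p ^ 4 := by rw [hcard]; ring
      _ < 2 ^ p := two_mul_pow_four_lt_two_pow (by lia)
      _ ≤ 2 ^ #B := Nat.pow_le_pow_right two_pos hpB
  obtain ⟨φ, hφ, hle⟩ := exists_ne_zero_sum_valMinAbs_sq_le (n := p)
    (fun a ↦ by ext <;> simp) hB htwo
  refine ⟨φ, hφ, ?_⟩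
  have hpi : 9.8596 ≤ Real.pi ^ 2 := by nlinarith [Real.pi_gt_d2]
  have hlog := log_le_div_five_hundred hpR.le
  rw [hcard, Nat.cast_pow, Real.log_pow, div_mul_eq_mul_div, div_le_iff₀ (by positivity)] at hle
  have hbound : 9.8596 * ∑ a ∈ B, ((φ a).valMinAbs : ℝ) ^ 2 ≤ 2 * (p / 500) * (2 * p ^ 2) := by
    grw [hpi, hle, hlog]
    norm_num
  linarith [(by positivity : (0 : ℝ) < (p : ℝ) ^ 3)]

end FourierAnalysis

section ZeroSumfreeSequences

variable {G : Type*} [AddCommMonoid G]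

lemma cmul_one_add_card_toFinset [DecidableEq G] (S : Multiset G) :
    cmul 1 S + #S.toFinset = Multiset.card S := by
  have hcmul : cmul 1 S = ∑ g ∈ S.toFinset, (S.count g - 1) := by
    unfold cmul
    congr!
  rw [hcmul, ← Multiset.toFinset_sum_count_eq S, Finset.card_eq_sum_ones, ← Finset.sum_add_distrib]
  refine Finset.sum_congr rfl fun g hg ↦ Nat.sub_add_cancel ?_
  exact Multiset.one_le_count_iff_mem.2 (Multiset.mem_toFinset.1 hg)

lemma cmul_one_eq_zero_iff_nodup {S : Multiset G} : cmul 1 S = 0 ↔ S.Nodup := by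
  classical
  rw [← Multiset.toFinset_card_eq_card_iff_nodup, ← cmul_one_add_card_toFinset S]
  lia

lemma cmul_one_cons_le_one {S : Multiset G} (hS : S.Nodup) (a : G) : cmul 1 (a ::ₘ S) ≤ 1 := by
  classical
  have hcons := cmul_one_add_card_toFinset (a ::ₘ S)
  have hle : #S.toFinset ≤ #(a ::ₘ S).toFinset := by
    rw [Multiset.toFinset_cons]
    exact Finset.card_le_card (Finset.subset_insert _ _)
  rw [Multiset.toFinset_card_of_nodup hS] at hle
  rw [Multiset.card_cons] at hcons
  lia

lemma isZeroSumfree_val_iff {T : Finset G} :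
    IsZeroSumfree T.val ↔ ∀ S ⊆ T, S.Nonempty → ∑ a ∈ S, a ≠ 0 := by
  constructor
  · intro hT S hS hne
    have := hT S.val (Finset.val_le_iff.2 hS) (by simpa using hne.ne_empty)
    rwa [Finset.sum_val] at this
  · intro hT S hS hne
    lift S to Finset G using Multiset.nodup_of_le hS T.nodup
    rw [Finset.sum_val]
    exact hT S (Finset.val_le_iff.1 hS)
      (Finset.nonempty_iff_ne_empty.2 fun h ↦ hne (Finset.val_eq_zero.2 h))

lemma isGreatest_olk_zero (G : Type*) [AddCommMonoid G] [Finite G] :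
    IsGreatest {m | ∃ T : Finset G, IsZeroSumfree T.val ∧ #T = m} (olk G 0) := by
  cases nonempty_fintype G
  have holk : olk G 0 = sSup {m | ∃ T : Finset G, IsZeroSumfree T.val ∧ #T = m} := by
    refine congrArg sSup (Set.ext fun m ↦ ⟨?_, ?_⟩)
    · rintro ⟨S, hS, hcm, rfl⟩
      lift S to Finset G using cmul_one_eq_zero_iff_nodup.1 (Nat.le_zero.1 hcm)
      exact ⟨S, hS, rfl⟩
    · rintro ⟨T, hT, rfl⟩
      exact ⟨T.val, hT, (cmul_one_eq_zero_iff_nodup.2 T.nodup).le, rfl⟩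
  rw [holk]
  have hempty : IsZeroSumfree (∅ : Finset G).val :=
    isZeroSumfree_val_iff.2 fun S hS hne ↦ absurd (Finset.subset_empty.1 hS) hne.ne_empty
  have hbdd : BddAbove {m | ∃ T : Finset G, IsZeroSumfree T.val ∧ #T = m} := by
    refine ⟨Fintype.card G, ?_⟩
    rintro _ ⟨T, -, rfl⟩
    exact Finset.card_le_univ T
  exact ⟨Nat.sSup_mem ⟨0, ∅, hempty, rfl⟩ hbdd, fun m hm ↦ le_csSup hbdd hm⟩

end ZeroSumfreeSequences

section ZeroSums

/-- Every nonempty proper subset of `B` has a nonzero sum. The sum of `B` itself is unconstrained,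
so that the notion covers zero-sumfree sets as well as minimal zero-sum sets, and all of their
subsets. -/
def NoProperZeroSum {G : Type*} [AddCommMonoid G] (B : Finset G) : Prop :=
  ∀ S ⊂ B, S.Nonempty → ∑ a ∈ S, a ≠ 0

namespace NoProperZeroSum

variable {G H : Type*} [AddCommMonoid G] [AddCommMonoid H] {B : Finset G}

lemma image [DecidableEq H] (hB : NoProperZeroSum B) {f : G →+ H} (hf : Function.Injective f) :
    NoProperZeroSum (B.image f) := by
  intro S hS hne hsum
  obtain ⟨T, hT, rfl⟩ := Finset.subset_image_iff.1 hS.subset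
  refine hB T ((Finset.coe_subset.1 hT).ssubset_of_ne ?_) (Finset.image_nonempty.1 hne) (hf ?_)
  · rintro rfl
    exact hS.ne rfl
  · rw [map_sum, _root_.map_zero, ← hsum, Finset.sum_image hf.injOn]

variable [DecidableEq G]

lemma card_filter_sum_eq_zero_le_two (hB : NoProperZeroSum B) :
    #{S ∈ B.powerset | ∑ a ∈ S, a = 0} ≤ 2 := by
  refine (Finset.card_le_card (t := {∅, B}) fun S hS ↦ ?_).trans Finset.card_le_two
  rw [Finset.mem_filter, Finset.mem_powerset] at hS
  by_contra! hne
  rw [Finset.mem_insert, Finset.mem_singleton, not_or] at hne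
  exact hB S (hS.1.ssubset_of_ne hne.2) (Finset.nonempty_iff_ne_empty.2 hne.1) hS.2

end NoProperZeroSum

lemma NoProperZeroSum.subsetSum_ne_univ {G : Type*} [AddCommGroup G] [Fintype G] [DecidableEq G]
    {B U : Finset G} (hB : NoProperZeroSum B) (hU : U ⊆ B) (hcard : #U + 2 ≤ #B) :
    U.subsetSum ≠ Finset.univ := by
  intro huniv
  obtain ⟨b, hb, hbU⟩ := Finset.exists_mem_notMem_of_card_lt_card (by lia : #U < #B)
  obtain ⟨S, hS, hsum⟩ := Finset.mem_subsetSum_iff.1 (huniv ▸ Finset.mem_univ (-b))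
  have hbS : b ∉ S := fun h ↦ hbU (hS h)
  have hssub : insert b S ⊂ B := by
    refine (Finset.insert_subset hb (hS.trans hU)).ssubset_of_ne fun h ↦ ?_
    have := Finset.card_le_card hS
    have := Finset.card_insert_of_notMem hbS
    lia
  refine hB _ hssub (Finset.insert_nonempty b S) ?_
  rw [Finset.sum_insert hbS, hsum, add_neg_cancel]

variable {p : ℕ} [hp : Fact p.Prime]

lemma NoProperZeroSum.mul_add_lt_of_le_card_sumsOver {G : Type*} [AddCommGroup G] [DecidableEq G]
    {B : Finset (G × ZMod p)} (hB : NoProperZeroSum B) {c : G} {j b : ℕ} (hj : 0 < j)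
    (hjF : j < #(fiber B c)) (hb : min p (b + 1) ≤ #(sumsOver (B \ fiber B c) (-(j • c)))) :
    j * (#(fiber B c) - j) + b + 1 < p := by
  by_contra! hle
  have huniv : (restrictedSums j (fiber B c)).image Prod.snd +
      sumsOver (B \ fiber B c) (-(j • c)) = Finset.univ :=
    eq_univ_of_min_le_card (min_add_add_one_le_card_add (min_le_card_image_restrictedSums
      (AddMonoidHom.snd G (ZMod p)) (injOn_snd_fiber B c) hjF.le) hb) hle
  obtain ⟨_, hx, y, hy, hxy⟩ := Finset.mem_add.1 (huniv ▸ Finset.mem_univ (0 : ZMod p))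
  obtain ⟨_, hs, rfl⟩ := Finset.mem_image.1 hx
  obtain ⟨S, hS, rfl, rfl⟩ := mem_restrictedSums.1 hs
  obtain ⟨T, hT, hTsum⟩ := Finset.mem_subsetSum_iff.1 (mem_sumsOver.1 hy)
  have hdisj : Disjoint S T := Finset.disjoint_of_subset_left hS
    (Finset.disjoint_of_subset_right hT Finset.disjoint_sdiff)
  have hssub : S ∪ T ⊂ B := by
    obtain ⟨a, haF, haS⟩ := Finset.exists_mem_notMem_of_card_lt_card hjF
    refine (Finset.ssubset_iff_of_subset (Finset.union_subset (hS.trans (fiber_subset B c))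
      (hT.trans Finset.sdiff_subset))).2 ⟨a, fiber_subset B c haF, ?_⟩
    exact fun h ↦ (Finset.mem_union.1 h).elim haS fun haT ↦ (Finset.mem_sdiff.1 (hT haT)).2 haF
  refine hB _ hssub ((Finset.card_pos.1 hj).mono Finset.subset_union_left) ?_
  rw [Finset.sum_union hdisj, hTsum]
  ext
  · simp [fst_sum_of_subset_fiber hS]
  · exact hxy

lemma subsetSum_union_eq_univ {G H : Type*} [AddCommGroup G] [AddCommGroup H] [Fintype G]
    [Fintype H] [DecidableEq G] [DecidableEq H] {W V : Finset (G × H)} (hWV : Disjoint W V)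
    (hW : W.subsetSum.image Prod.fst = Finset.univ) {c : G} (hV : sumsOver V c = Finset.univ) :
    (W ∪ V).subsetSum = Finset.univ := by
  refine Finset.eq_univ_of_forall fun g ↦ ?_
  obtain ⟨w, hw, hwg⟩ := Finset.mem_image.1 (hW ▸ Finset.mem_univ (g.1 - c))
  have hv : (c, g.2 - w.2) ∈ V.subsetSum := mem_sumsOver.1 (hV ▸ Finset.mem_univ _)
  have hg : g = w + (c, g.2 - w.2) := by ext <;> simp [hwg]
  exact hg ▸ add_mem_subsetSum_union hWV hw hv

lemma subsetSum_eq_univ_of_card_fiber_le (hp6000 : 6000 < p) {U : Finset (ZMod p × ZMod p)}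
    (hU : p ≤ #U) {h : ℕ} (hfib : ∀ c, #(fiber U c) ≤ h)
    (hh : 19 * h + 20 * (p / 100 + 1) ≤ p)
    (hvar : ∑ a ∈ U, (a.1.valMinAbs : ℝ) ^ 2 ≤ (p : ℝ) ^ 3 / 1230) :
    U.subsetSum = Finset.univ := by
  obtain ⟨W, hWU, hWcard, hW⟩ := exists_subset_card_eq_min_le_card_image_subsetSum
    (AddMonoidHom.fst (ZMod p) (ZMod p)) (by norm_num : 10 ≤ 20) hfib (p / 100 + 1) (by lia)
  have hUW : #(U \ W) = #U - 20 * (p / 100 + 1) := by rw [Finset.card_sdiff_of_subset hWU, hWcard]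
  have hquad := le_sum_half_card_fiber_mul hp6000 (U := U \ W) (by lia) <|
    (Finset.sum_le_sum_of_subset_of_nonneg Finset.sdiff_subset
      fun a _ _ ↦ sq_nonneg _).trans hvar
  have hV := min_sum_le_card_sumsOver (B := U \ W) (C := Finset.univ)
    (j := fun c ↦ #(fiber (U \ W) c) / 2) fun c _ ↦ Nat.div_le_self _ 2
  simp only [Finset.mem_univ, Finset.filter_true] at hV
  rw [← Finset.union_sdiff_of_subset hWU]
  exact subsetSum_union_eq_univ Finset.disjoint_sdiff (eq_univ_of_min_le_card hW (by lia))
    (eq_univ_of_min_le_card hV hquad)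

end ZeroSums

section LargeFiber

variable {p : ℕ} [hp : Fact p.Prime]

lemma sum_univ_zmod (hp2 : p ≠ 2) : ∑ a : ZMod p, a = 0 := by
  have hcard : 1 < Fintype.card (ZMod p) - 1 := by
    have := hp.out.two_le
    rw [ZMod.card]
    lia
  simpa using FiniteField.sum_pow_lt_card_sub_one (ZMod p) 1 hcard

namespace NoProperZeroSum

section

variable {G : Type*} [AddCommGroup G] [DecidableEq G] {B : Finset (G × ZMod p)} {c d : G} {i j : ℕ}

lemma mul_lt_of_mem_subsetSum (hB : NoProperZeroSum B) (hj : 0 < j) (hjF : j < #(fiber B c))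
    {x : G × ZMod p} (hx : x ∈ (B \ fiber B c).subsetSum) (hxc : x.1 + j • c = 0) :
    j * (#(fiber B c) - j) + 1 < p := by
  refine hB.mul_add_lt_of_le_card_sumsOver (b := 0) hj hjF ((min_le_right _ _).trans ?_)
  exact Finset.card_pos.2 ⟨x.2, mem_sumsOver.2 (by rwa [← eq_neg_of_add_eq_zero_left hxc])⟩

lemma min_le_card_sumsOver_fiber_zero (hB : NoProperZeroSum B) (hL : fiber B 0 ⊂ B) :
    min p (#(fiber B 0) + 1) ≤ #(sumsOver (fiber B 0) 0) := by
  have hsnd : ∀ a ∈ fiber B 0, AddMonoidHom.snd G (ZMod p) a ≠ 0 := fun a ha h0 ↦ by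
    refine hB {a} ((Finset.singleton_subset_iff.2 ha).trans_ssubset hL)
      (Finset.singleton_nonempty a) ?_
    rw [Finset.sum_singleton]
    exact Prod.ext (mem_fiber.1 ha).2 h0
  refine (min_le_card_image_subsetSum _ hsnd).trans (Finset.card_le_card ?_)
  refine Finset.image_subset_iff.2 fun x hx ↦ mem_sumsOver.2 ?_
  obtain ⟨S, hS, rfl⟩ := Finset.mem_subsetSum_iff.1 hx
  have hfst : (∑ a ∈ S, a).1 = 0 := by rw [fst_sum_of_subset_fiber hS, smul_zero]
  convert hx using 1
  exact Prod.ext hfst.symm rfl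

lemma mul_add_card_fiber_zero_lt (hB : NoProperZeroSum B) (hj : 0 < j) (hjF : j < #(fiber B c))
    (hc : c ≠ 0) {a : G × ZMod p} (haB : a ∈ B) (hac : a.1 ≠ c) (ha0 : a.1 ≠ 0)
    (haj : a.1 + j • c = 0) : j * (#(fiber B c) - j) + #(fiber B 0) + 1 < p := by
  have hL : fiber B 0 ⊂ B := (fiber_subset B 0).ssubset_of_mem_notMem haB
    fun h ↦ ha0 (mem_fiber.1 h).2
  have hdisj : Disjoint {a} (fiber B 0) :=
    Finset.disjoint_singleton_left.2 fun h ↦ ha0 (mem_fiber.1 h).2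
  have hsub : {a} ∪ fiber B 0 ⊆ B \ fiber B c := by
    intro x hx
    simp only [Finset.mem_union, Finset.mem_singleton, mem_fiber, Finset.mem_sdiff] at hx ⊢
    grind
  have ha : min p (0 + 1) ≤ #(sumsOver {a} a.1) := (min_le_right _ _).trans <|
    Finset.card_pos.2 ⟨a.2, mem_sumsOver.2 (Finset.subset_subsetSum (Finset.mem_singleton_self a))⟩
  refine hB.mul_add_lt_of_le_card_sumsOver hj hjF ?_
  rw [← eq_neg_of_add_eq_zero_left haj]
  have := min_add_add_one_le_card_add ha (hB.min_le_card_sumsOver_fiber_zero hL)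
  rw [zero_add] at this
  grw [this, sumsOver_add_subset_sumsOver_union hdisj, add_zero, sumsOver_mono hsub]

lemma mul_add_mul_lt (hB : NoProperZeroSum B) (hj : 0 < j) (hjF : j < #(fiber B c)) (hcd : d ≠ c)
    (hi : i ≤ #(fiber B d)) (hij : i • d + j • c = 0) :
    j * (#(fiber B c) - j) + i * (#(fiber B d) - i) + 1 < p := by
  have hsub : fiber B d ⊆ B \ fiber B c := fun x hx ↦ by
    simp only [mem_fiber, Finset.mem_sdiff] at hx ⊢
    grind
  refine hB.mul_add_lt_of_le_card_sumsOver hj hjF ?_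
  rw [← eq_neg_of_add_eq_zero_left hij]
  grw [min_le_card_sumsOver_fiber hi, sumsOver_mono hsub]

lemma card_fiber_zero_le_olk (hB : NoProperZeroSum B) (hL : fiber B 0 ⊂ B) :
    #(fiber B 0) ≤ olk (ZMod p) 0 := by
  have hinj := injOn_snd_fiber B 0
  rw [← Finset.card_image_of_injOn hinj]
  refine (isGreatest_olk_zero _).2 ⟨_, isZeroSumfree_val_iff.2 fun S hS hne hsum ↦ ?_, rfl⟩
  obtain ⟨T, hT, rfl⟩ := Finset.subset_image_iff.1 hS
  refine hB T ((Finset.coe_subset.1 hT).trans_ssubset hL) (Finset.image_nonempty.1 hne) ?_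
  rw [Finset.sum_image (hinj.mono hT), ← Prod.snd_sum] at hsum
  exact Prod.ext (by rw [fst_sum_of_subset_fiber (Finset.coe_subset.1 hT), smul_zero]; rfl) hsum

end

lemma card_fiber_lt (hp2 : p ≠ 2) {B : Finset (ZMod p × ZMod p)} (hB : NoProperZeroSum B)
    (hpB : p < #B) (c : ZMod p) : #(fiber B c) < p := by
  have hinj := injOn_snd_fiber B c
  have hcard := Finset.card_image_of_injOn hinj
  have hle := Finset.card_le_univ ((fiber B c).image Prod.snd)
  rw [hcard, ZMod.card] at hle
  refine hle.lt_of_ne fun hp' ↦ ?_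
  have hssub : fiber B c ⊂ B := (fiber_subset B c).ssubset_of_ne fun h ↦
    hpB.ne (hp'.symm.trans (congrArg Finset.card h))
  refine hB _ hssub (Finset.card_pos.1 (hp'.symm ▸ hp.out.pos)) (Prod.ext ?_ ?_)
  · simp [fst_sum_of_subset_fiber subset_rfl, hp']
  · have huniv : (fiber B c).image Prod.snd = Finset.univ :=
      (Finset.card_eq_iff_eq_univ _).1 (by rw [hcard, hp', ZMod.card])
    rw [Prod.snd_sum, ← Finset.sum_image (f := fun y ↦ y) hinj, huniv, sum_univ_zmod hp2]
    rfl

end NoProperZeroSum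

lemma exists_mem_subsetSum_add_natCast_eq_zero {G : Type*} [AddCommMonoid G] [DecidableEq G]
    (f : G →+ ZMod p) {V X : Finset G} (hXV : X ⊆ V) (hV : ∀ a ∈ V, f a ≠ 0)
    (hX : ∀ a ∈ X, f a ≠ 1 ∧ f a ≠ -1) {m : ℕ} (hm : m < p) (hcard : p ≤ m + 2 * #X + #V + 1)
    (s : ℕ) : ∃ j ∈ Finset.Icc s (s + m + #X), ∃ x ∈ V.subsetSum, f x + j = 0 := by
  have hrange : #((Finset.range (m + 1)).image (Nat.cast : ℕ → ZMod p)) = m + 1 := by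
    rw [Finset.card_image_of_injOn, Finset.card_range]
    exact (CharP.natCast_injOn_Iio (ZMod p) p).mono fun i hi ↦ by
      rw [Finset.mem_coe, Finset.mem_range] at hi
      exact Set.mem_Iio.2 (by lia)
  have huniv := eq_univ_of_min_le_card (min_add_add_one_le_card_add
    (min_add_add_one_le_card_add ((min_le_right p _).trans_eq hrange.symm)
      (min_le_card_image_subsetSum_add_image_range f fun a ha ↦ ⟨hV a (hXV ha), hX a ha⟩))
    (min_le_card_image_subsetSum f (U := V \ X) fun a ha ↦ hV a (Finset.sdiff_subset ha))) (by
      rw [Finset.card_sdiff_of_subset hXV]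
      have := Finset.card_le_card hXV
      lia)
  have hmem := huniv ▸ Finset.mem_univ (-(s : ZMod p))
  simp only [Finset.mem_add, Finset.mem_image, Finset.mem_range] at hmem
  obtain ⟨_, ⟨_, ⟨i, hi, rfl⟩, _, ⟨_, ⟨x, hx, rfl⟩, _, ⟨r, hr, rfl⟩, rfl⟩, rfl⟩,
    _, ⟨y, hy, rfl⟩, hsum⟩ := hmem
  refine ⟨s + i + r, Finset.mem_Icc.2 ⟨by lia, by lia⟩, x + y, ?_, ?_⟩
  · rw [← Finset.union_sdiff_of_subset hXV]
    exact add_mem_subsetSum_union Finset.disjoint_sdiff hx hy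
  · rw [_root_.map_add]
    push_cast
    linear_combination hsum

lemma mul_add_le_mul_add_sq {w a b : ℕ} (ha : w ≤ a) (hb : w ≤ b) :
    w * (a + b) ≤ a * b + w ^ 2 := by
  nlinarith

lemma exists_subset_lt_sum_le {α : Type*} (f : α → ℕ) {U : Finset α} {M : ℕ}
    (hf : ∀ a ∈ U, f a ≤ M) (hM : M < ∑ a ∈ U, f a) :
    ∃ T ⊆ U, M < ∑ a ∈ T, f a ∧ ∑ a ∈ T, f a ≤ 2 * M := by
  classical
  induction U using Finset.induction_on with
  | empty => simp at hM
  | insert a U ha ih =>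
    by_cases hU : M < ∑ a ∈ U, f a
    · obtain ⟨T, hT, hsum⟩ := ih (fun b hb ↦ hf b (Finset.mem_insert_of_mem hb)) hU
      exact ⟨T, hT.trans (Finset.subset_insert a U), hsum⟩
    · refine ⟨insert a U, subset_rfl, hM, ?_⟩
      have := hf a (Finset.mem_insert_self a U)
      rw [Finset.sum_insert ha]
      lia

/-- The elements of `B` over a first coordinate other than `0`, `1` and `-1`, which are the ones
for which `{0, a.1} + {0, 1}` has four elements. -/
def otherFibers (B : Finset (ZMod p × ZMod p)) : Finset (ZMod p × ZMod p) :=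
  {a ∈ B | a.1 ≠ 0 ∧ a.1 ≠ 1 ∧ a.1 ≠ -1}

lemma mem_otherFibers {B : Finset (ZMod p × ZMod p)} {a : ZMod p × ZMod p} :
    a ∈ otherFibers B ↔ a ∈ B ∧ a.1 ≠ 0 ∧ a.1 ≠ 1 ∧ a.1 ≠ -1 :=
  Finset.mem_filter

lemma otherFibers_subset_sdiff (B : Finset (ZMod p × ZMod p)) :
    otherFibers B ⊆ B \ fiber B 1 := fun a ha ↦ by
  rw [mem_otherFibers] at ha
  exact Finset.mem_sdiff.2 ⟨ha.1, fun h ↦ ha.2.2.1 (mem_fiber.1 h).2⟩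

lemma neg_one_ne_one_zmod (hp2 : p ≠ 2) : (-1 : ZMod p) ≠ 1 :=
  Ring.neg_one_ne_one_of_char_ne_two (by rwa [ZMod.ringChar_zmod_n])

lemma card_fibers_add_card_otherFibers (hp2 : p ≠ 2) (B : Finset (ZMod p × ZMod p)) :
    #(fiber B 1) + #(fiber B 0) + #(fiber B (-1)) + #(otherFibers B) = #B := by
  have hne := neg_one_ne_one_zmod hp2
  simp only [fiber, otherFibers, Finset.card_filter, ← Finset.sum_add_distrib]
  rw [Finset.card_eq_sum_ones]
  refine Finset.sum_congr rfl fun a _ ↦ ?_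
  grind

lemma val_bounds_of_mem_otherFibers {B : Finset (ZMod p × ZMod p)} {a : ZMod p × ZMod p}
    (ha : a ∈ otherFibers B) : 2 ≤ a.1.val ∧ a.1.val + 2 ≤ p := by
  obtain ⟨-, h0, h1, hneg⟩ := mem_otherFibers.1 ha
  have hlt := a.1.val_lt
  have hval0 : a.1.val ≠ 0 := (ZMod.val_ne_zero _).2 h0
  have hval1 : a.1.val ≠ 1 := fun h ↦ h1 (by rw [← ZMod.natCast_zmod_val a.1, h, Nat.cast_one])
  have hval_neg : a.1.val + 1 ≠ p := fun h ↦ hneg <| eq_neg_of_add_eq_zero_left <| by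
    rw [← ZMod.natCast_zmod_val a.1, ← Nat.cast_succ, Nat.succ_eq_add_one, h, ZMod.natCast_self]
  lia

namespace NoProperZeroSum

variable {B : Finset (ZMod p × ZMod p)} {w : ℕ}

lemma card_otherFibers_lt (hp2 : p ≠ 2) (hB : NoProperZeroSum B) (hFp : #(fiber B 1) < p)
    (hL : #(fiber B 0) + p ≤ #B + 1) (hw : p ≤ 3 * w ^ 2) (hF : 4 * w ≤ #(fiber B 1)) :
    #(otherFibers B) < 2 * w := by
  by_contra! hO
  obtain ⟨X, hXO, hX⟩ := Finset.exists_subset_card_eq hO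
  have hcard := card_fibers_add_card_otherFibers hp2 B
  have hw0 : 0 < w := Nat.pos_of_ne_zero fun h ↦ by
    have := hp.out.pos
    simp_all
  have hdisj : Disjoint (fiber B (-1)) (otherFibers B) := Finset.disjoint_left.2 fun a ha haO ↦
    (mem_otherFibers.1 haO).2.2.2 (mem_fiber.1 ha).2
  have hsub : fiber B (-1) ∪ otherFibers B ⊆ B \ fiber B 1 := by
    refine Finset.union_subset (fun a ha ↦ ?_) (otherFibers_subset_sdiff B)
    rw [mem_fiber] at ha
    exact Finset.mem_sdiff.2 ⟨ha.1, fun h ↦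
      neg_one_ne_one_zmod hp2 (ha.2.symm.trans (mem_fiber.1 h).2)⟩
  have hne : ∀ a ∈ fiber B (-1) ∪ otherFibers B, a.1 ≠ 0 := fun a ha ↦
    (Finset.mem_union.1 ha).elim (fun ha ↦ (mem_fiber.1 ha).2.symm ▸ neg_ne_zero.2 one_ne_zero)
      fun ha ↦ (mem_otherFibers.1 ha).2.1
  obtain ⟨j, hj, x, hx, hxj⟩ := exists_mem_subsetSum_add_natCast_eq_zero
    (AddMonoidHom.fst (ZMod p) (ZMod p)) (hXO.trans Finset.subset_union_right) hne
    (fun a ha ↦ (mem_otherFibers.1 (hXO ha)).2.2) (m := #(fiber B 1) - 4 * w)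
    (by lia) (by rw [Finset.card_union_of_disjoint hdisj]; lia) w
  rw [Finset.mem_Icc] at hj
  have hlt := hB.mul_lt_of_mem_subsetSum (c := 1) (j := j) (by lia) (by lia)
    (Finset.subsetSum_mono hsub hx) (by rwa [nsmul_one])
  have hmul := mul_add_le_mul_add_sq hj.1 (by lia : w ≤ #(fiber B 1) - j)
  rw [Nat.add_sub_cancel' (by lia)] at hmul
  nlinarith

lemma lt_sum_val_add_two (hB : NoProperZeroSum B) (hF : p + 3 ≤ 2 * #(fiber B 1))
    {T : Finset (ZMod p × ZMod p)} (hT : T ⊆ B \ fiber B 1)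
    (hsum : p + 2 ≤ #(fiber B 1) + ∑ a ∈ T, a.1.val) : p < ∑ a ∈ T, a.1.val + 2 := by
  by_contra! hle
  have hfst : (∑ a ∈ T, a).1 = (∑ a ∈ T, a.1.val : ℕ) := by
    rw [Prod.fst_sum, Nat.cast_sum]
    exact Finset.sum_congr rfl fun a _ ↦ (ZMod.natCast_zmod_val a.1).symm
  have hlt := hB.mul_lt_of_mem_subsetSum (c := 1) (j := p - ∑ a ∈ T, a.1.val) (by lia) (by lia)
    (Finset.mem_subsetSum_iff.2 ⟨T, hT, rfl⟩) (by
      rw [hfst, nsmul_one, ← Nat.cast_add, Nat.add_sub_cancel' (by lia), ZMod.natCast_self])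
  have hmul := mul_add_le_mul_add_sq (by lia : 2 ≤ p - ∑ a ∈ T, a.1.val)
    (by lia : 2 ≤ #(fiber B 1) - (p - ∑ a ∈ T, a.1.val))
  lia

lemma sum_val_otherFibers_add_card_le (hB : NoProperZeroSum B) (hFp : #(fiber B 1) < p)
    (hF : p + 4 ≤ 2 * #(fiber B 1)) :
    ∑ a ∈ otherFibers B, a.1.val + #(fiber B 1) ≤ p + 1 := by
  have hsub := otherFibers_subset_sdiff B
  by_contra! hlt
  have hval : ∀ a ∈ otherFibers B, a.1.val ≤ p + 1 - #(fiber B 1) := fun a ha ↦ by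
    have := hB.lt_sum_val_add_two (by lia) (Finset.singleton_subset_iff.2 (hsub ha))
    rw [Finset.sum_singleton] at this
    have := val_bounds_of_mem_otherFibers ha
    lia
  obtain ⟨T, hT, hlarge, hsmall⟩ := exists_subset_lt_sum_le _ hval (by lia)
  have := hB.lt_sum_val_add_two (by lia) (hT.trans hsub) (by lia)
  lia

lemma fiber_neg_one_nonempty (hp2 : p ≠ 2) (hB : NoProperZeroSum B) (hFp : #(fiber B 1) < p)
    (hF : p + 4 ≤ 2 * #(fiber B 1)) {k : ℕ} (hk : 0 < k) (hL : #(fiber B 0) ≤ k)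
    (hcard : #B = p + k) : (fiber B (-1)).Nonempty := by
  by_contra hM
  rw [Finset.not_nonempty_iff_eq_empty] at hM
  have hsplit := card_fibers_add_card_otherFibers hp2 B
  rw [hM, Finset.card_empty] at hsplit
  have hsum := hB.sum_val_otherFibers_add_card_le hFp hF
  have htwo : #(otherFibers B) * 2 ≤ ∑ a ∈ otherFibers B, a.1.val :=
    Finset.card_nsmul_le_sum _ _ _ fun a ha ↦ (val_bounds_of_mem_otherFibers ha).1
  have hO : #(otherFibers B) = 1 := by lia
  obtain ⟨a, ha⟩ := Finset.card_eq_one.1 hO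
  have haO : a ∈ otherFibers B := ha ▸ Finset.mem_singleton_self a
  have hval : a.1.val = 2 := by
    have := (val_bounds_of_mem_otherFibers haO).1
    rw [ha, Finset.sum_singleton] at hsum
    lia
  have hzero : a.1 + (p - 2) • (1 : ZMod p) = 0 := by
    rw [← ZMod.natCast_zmod_val a.1, hval, nsmul_one, ← Nat.cast_add, Nat.add_sub_cancel' (by lia),
      ZMod.natCast_self]
  obtain ⟨haB, ha0, ha1, -⟩ := mem_otherFibers.1 haO
  have := hB.mul_add_card_fiber_zero_lt (by lia) (by lia) one_ne_zero haB ha1 ha0 hzero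
  rw [show #(fiber B 1) - (p - 2) = 1 by lia] at this
  lia

lemma card_fiber_one_lt (hB : NoProperZeroSum B) (hw : p ≤ 3 * w ^ 2) (hwp : 8 * w + 10 ≤ p)
    (hwk : 2 * w ≤ olk (ZMod p) 0) (hcard : #B = p + olk (ZMod p) 0) :
    #(fiber B 1) < 4 * w := by
  by_contra! hF
  have hp2 : p ≠ 2 := by lia
  have hw0 : 0 < w := Nat.pos_of_ne_zero fun h ↦ by simp [h, hp.out.ne_zero] at hw
  have hLB : fiber B 0 ⊂ B := by
    obtain ⟨a, ha⟩ : (fiber B 1).Nonempty := Finset.card_pos.1 (by lia)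
    refine (fiber_subset B 0).ssubset_of_mem_notMem (fiber_subset B 1 ha) fun h ↦ ?_
    exact one_ne_zero ((mem_fiber.1 ha).2.symm.trans (mem_fiber.1 h).2)
  have hsplit := card_fibers_add_card_otherFibers hp2 B
  have hL := hB.card_fiber_zero_le_olk hLB
  have hFp := hB.card_fiber_lt hp2 (by lia : p < #B) 1
  have hO := hB.card_otherFibers_lt hp2 hFp (by lia) hw hF
  have hneg := neg_one_ne_one_zmod hp2
  obtain hM | hM | hM : #(fiber B (-1)) = 0 ∨ #(fiber B (-1)) = 1 ∨ 2 ≤ #(fiber B (-1)) := by lia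
  · have := hB.fiber_neg_one_nonempty hp2 hFp (by lia) (by lia) hL hcard
    exact this.card_pos.ne' hM
  · obtain ⟨a, ha⟩ := Finset.card_pos.1 (hM ▸ one_pos)
    obtain ⟨haB, ha1⟩ := mem_fiber.1 ha
    have := hB.mul_add_card_fiber_zero_lt one_pos (by lia) one_ne_zero haB (ha1 ▸ hneg)
      (ha1 ▸ neg_ne_zero.2 one_ne_zero) (by simp [ha1])
    lia
  · have := hB.mul_add_mul_lt two_pos (by lia) hneg hM (by simp)
    lia

end NoProperZeroSum

end LargeFiber

section SizeBound

variable {p : ℕ}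

lemma le_olk_zmod_of_sum_range_lt {n : ℕ} (hn : ∑ i ∈ Finset.range (n + 1), i < p) :
    n ≤ olk (ZMod p) 0 := by
  have : NeZero p := ⟨by lia⟩
  have hnp : n < p := (Finset.single_le_sum_of_canonicallyOrdered
    (f := fun i ↦ i) (Finset.self_mem_range_succ n)).trans_lt hn
  have hinj : Set.InjOn (Nat.cast : ℕ → ZMod p) (Finset.Icc 1 n : Set ℕ) :=
    (CharP.natCast_injOn_Iio (ZMod p) p).mono fun i hi ↦
      (Finset.mem_Icc.1 (Finset.mem_coe.1 hi)).2.trans_lt hnp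
  refine (isGreatest_olk_zero _).2 ⟨(Finset.Icc 1 n).image Nat.cast,
    isZeroSumfree_val_iff.2 fun S hS hne hsum ↦ ?_, ?_⟩
  · obtain ⟨T, hT, rfl⟩ := Finset.subset_image_iff.1 hS
    rw [Finset.sum_image (hinj.mono hT), ← Nat.cast_sum, ZMod.natCast_eq_zero_iff] at hsum
    have hmem : ∀ i ∈ T, 1 ≤ i ∧ i ≤ n := fun i hi ↦ Finset.mem_Icc.1 (hT hi)
    have hpos : 0 < ∑ i ∈ T, i :=
      Finset.sum_pos (fun i hi ↦ (hmem i hi).1) (Finset.image_nonempty.1 hne)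
    refine Nat.not_dvd_of_pos_of_lt hpos (hn.trans_le' ?_) hsum
    exact Finset.sum_le_sum_of_subset fun i hi ↦
      Finset.mem_range.2 (Nat.lt_succ_of_le (hmem i hi).2)
  · rw [Finset.card_image_of_injOn hinj, Nat.card_Icc, Nat.add_sub_cancel]

/-- The least `w` with `p ≤ 3 * w ^ 2` is about `√(p / 3)`, so `{1, …, 2 * w}` has sum about
`2 * p / 3` and there is room below `p`. -/
lemma exists_le_three_mul_sq (hp : 6000 < p) :
    ∃ w, p ≤ 3 * w ^ 2 ∧ w * (2 * w + 1) < p ∧ 380 * w + 100 ≤ 4 * p := by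
  obtain ⟨v, hv⟩ : ∃ v, v = Nat.sqrt (p / 3) := ⟨_, rfl⟩
  have hle : 3 * (v * v) ≤ p := by
    have := Nat.sqrt_le (p / 3)
    rw [← hv] at this
    lia
  have hlt : p < 3 * ((v + 1) * (v + 1)) := by
    have := Nat.lt_succ_sqrt (p / 3)
    rw [← hv, Nat.succ_eq_add_one] at this
    lia
  have hv40 : 40 ≤ v := by
    by_contra! hcon
    nlinarith
  exact ⟨v + 1, by nlinarith, by nlinarith, by nlinarith [sq_nonneg ((v : ℤ) - 32)]⟩

variable [hp : Fact p.Prime]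

lemma exists_injective_prod {φ : ZMod p × ZMod p →+ ZMod p} (hφ : φ ≠ 0) :
    ∃ ψ : ZMod p × ZMod p →+ ZMod p, Function.Injective (φ.prod ψ) := by
  have hcoord (a : ZMod p × ZMod p) : φ a = a.1 * φ (1, 0) + a.2 * φ (0, 1) := by
    have hsmul := map_smul (φ.toZModLinearMap p)
    simp only [AddMonoidHom.coe_toZModLinearMap] at hsmul
    rw [← smul_eq_mul, ← smul_eq_mul, ← hsmul, ← hsmul, ← _root_.map_add]
    simp
  by_cases h : φ (1, 0) = 0
  · have h' : φ (0, 1) ≠ 0 := fun h' ↦ hφ (AddMonoidHom.ext fun a ↦ by simp [hcoord a, h, h'])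
    refine ⟨AddMonoidHom.fst _ _, (injective_iff_map_eq_zero _).2 fun a ha ↦ ?_⟩
    obtain ⟨hφa, h1⟩ := Prod.ext_iff.1 ha
    change φ a = 0 at hφa
    change a.1 = 0 at h1
    rw [hcoord, h1, zero_mul, zero_add] at hφa
    exact Prod.ext h1 ((mul_eq_zero_iff_right h').1 hφa)
  · refine ⟨AddMonoidHom.snd _ _, (injective_iff_map_eq_zero _).2 fun a ha ↦ ?_⟩
    obtain ⟨hφa, h2⟩ := Prod.ext_iff.1 ha
    change φ a = 0 at hφa
    change a.2 = 0 at h2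
    rw [hcoord, h2, zero_mul, add_zero] at hφa
    exact Prod.ext ((mul_eq_zero_iff_right h).1 hφa) h2

namespace NoProperZeroSum

variable {B : Finset (ZMod p × ZMod p)} {w : ℕ}

lemma card_fiber_zero_lt (hB : NoProperZeroSum B) (hw : p ≤ 3 * w ^ 2) :
    #(fiber B 0) < 4 * w := by
  by_contra! hL
  have hw0 : 0 < w := Nat.pos_of_ne_zero fun h ↦ by simp [h, hp.out.ne_zero] at hw
  have hlt := hB.mul_lt_of_mem_subsetSum (c := 0) hw0 (by lia)
    Finset.zero_mem_subsetSum (by simp)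
  have hmul := Nat.mul_le_mul_left w (by lia : 3 * w ≤ #(fiber B 0) - w)
  nlinarith

lemma card_fiber_lt_four_mul (hB : NoProperZeroSum B) (hw : p ≤ 3 * w ^ 2) (hwp : 8 * w + 10 ≤ p)
    (hwk : 2 * w ≤ olk (ZMod p) 0) (hcard : #B = p + olk (ZMod p) 0) (c : ZMod p) :
    #(fiber B c) < 4 * w := by
  obtain rfl | hc := eq_or_ne c 0
  · exact hB.card_fiber_zero_lt hw
  let f : ZMod p × ZMod p →+ ZMod p × ZMod p := (AddMonoidHom.mulLeft c⁻¹).prodMap (.id _)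
  have hf : Function.Injective f :=
    (mul_right_injective₀ (inv_ne_zero hc)).prodMap Function.injective_id
  have hsub : (fiber B c).image f ⊆ fiber (B.image f) 1 := Finset.image_subset_iff.2 fun a ha ↦ by
    obtain ⟨haB, rfl⟩ := mem_fiber.1 ha
    exact mem_fiber.2 ⟨Finset.mem_image_of_mem f haB, inv_mul_cancel₀ hc⟩
  calc #(fiber B c) = #((fiber B c).image f) := (Finset.card_image_of_injective _ hf).symm
    _ ≤ #(fiber (B.image f) 1) := Finset.card_le_card hsub
    _ < 4 * w := (hB.image hf).card_fiber_one_lt hw hwp hwk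
      ((Finset.card_image_of_injective _ hf).trans hcard)

theorem card_ne_add_olk (hp6000 : 6000 < p) (hB : NoProperZeroSum B) :
    #B ≠ p + olk (ZMod p) 0 := by
  intro hcard
  obtain ⟨w, hw, hsum, hwp⟩ := exists_le_three_mul_sq hp6000
  have hwk : 2 * w ≤ olk (ZMod p) 0 := by
    refine le_olk_zmod_of_sum_range_lt ?_
    rw [Finset.sum_range_id, Nat.add_sub_cancel, mul_left_comm, Nat.mul_div_cancel_left _ two_pos]
    lia
  have hw0 : 0 < w := Nat.pos_of_ne_zero fun h ↦ by simp [h, hp.out.ne_zero] at hw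
  obtain ⟨φ, hφ, hvar⟩ := exists_ne_zero_sum_valMinAbs_sq_le_cube hp6000 (by lia : p ≤ #B)
    hB.card_filter_sum_eq_zero_le_two
  obtain ⟨ψ, hinj⟩ := exists_injective_prod hφ
  have hB' := hB.image hinj
  have hcard' : #(B.image (φ.prod ψ)) = p + olk (ZMod p) 0 :=
    (Finset.card_image_of_injective _ hinj).trans hcard
  obtain ⟨U, hUB, hU⟩ := Finset.exists_subset_card_eq (by lia : p ≤ #(B.image (φ.prod ψ)))
  refine hB'.subsetSum_ne_univ hUB (by lia) <|
    subsetSum_eq_univ_of_card_fiber_le hp6000 hU.ge (h := 4 * w) (fun c ↦ ?_) (by lia) ?_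
  · grw [fiber_mono hUB c]
    exact (hB'.card_fiber_lt_four_mul hw (by lia) hwk hcard' c).le
  · refine (Finset.sum_le_sum_of_subset_of_nonneg hUB fun a _ _ ↦ sq_nonneg _).trans ?_
    rwa [Finset.sum_image hinj.injOn]

end NoProperZeroSum

end SizeBound

section Constants

lemma IsZeroSumfree.isMinimalZeroSum_cons {G : Type*} [AddCommGroup G] {S : Multiset G}
    (hS : IsZeroSumfree S) : IsMinimalZeroSum (-S.sum ::ₘ S) := by
  classical
  refine ⟨Multiset.cons_ne_zero, by rw [Multiset.sum_cons, neg_add_cancel],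
    fun T hT hT0 hTS hsum ↦ ?_⟩
  by_cases hmem : -S.sum ∈ T
  · obtain ⟨R, rfl⟩ := Multiset.exists_cons_of_mem hmem
    obtain ⟨Q, hQ⟩ := Multiset.le_iff_exists_add.1 ((Multiset.cons_le_cons_iff _).1 hT)
    refine hS Q (hQ ▸ Multiset.le_add_left Q R) (fun hQ0 ↦ hTS ?_) ?_
    · rw [hQ, hQ0, add_zero]
    · rw [Multiset.sum_cons, hQ, Multiset.sum_add] at hsum
      simpa using hsum
  · exact hS T ((Multiset.le_cons_of_notMem hmem).1 hT) hT0 hsum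

lemma IsMinimalZeroSum.noProperZeroSum {G : Type*} [AddCommMonoid G] [DecidableEq G]
    {S : Multiset G} (hS : IsMinimalZeroSum S) {B : Finset G} (hB : B ⊆ S.toFinset) :
    NoProperZeroSum B := by
  intro T hT hne hsum
  have hBS : B.val ≤ S :=
    (Finset.val_le_iff.2 hB).trans (S.toFinset_val.trans_le (Multiset.dedup_le S))
  refine hS.2.2 T.val ((Finset.val_le_iff.2 hT.subset).trans hBS)
    (fun h ↦ hne.ne_empty (Finset.val_eq_zero.1 h)) (fun h ↦ ?_) (T.sum_val.trans hsum)
  exact hT.not_subset (Finset.val_le_iff.1 (hBS.trans_eq h.symm))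

lemma fst_sum_eq_card_fiber_one {R H : Type*} [Semiring R] [DecidableEq R] [AddCommMonoid H]
    {S : Finset (R × H)} (hS : ∀ a ∈ S, a.1 = 0 ∨ a.1 = 1) :
    (∑ a ∈ S, a).1 = (#(fiber S 1) : R) := by
  rw [Prod.fst_sum, fiber, Finset.natCast_card_filter]
  refine Finset.sum_congr rfl fun a ha ↦ ?_
  obtain h | h := hS a ha <;> simp [h]

variable {p : ℕ} [hp : Fact p.Prime]

lemma isZeroSumfree_union_product {H : Type*} [AddCommMonoid H] [DecidableEq H] {T P : Finset H}
    (hT : IsZeroSumfree T.val) (hP : #P < p) :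
    IsZeroSumfree (({0} ×ˢ T ∪ {1} ×ˢ P : Finset (ZMod p × H)).val) := by
  refine isZeroSumfree_val_iff.2 fun S hS hne hsum ↦ ?_
  have hmem : ∀ a ∈ S, a.1 = 0 ∧ a.2 ∈ T ∨ a.1 = 1 ∧ a.2 ∈ P := fun a ha ↦ by
    have := hS ha
    simpa only [Finset.mem_union, Finset.mem_product, Finset.mem_singleton] using this
  have hfst := fst_sum_eq_card_fiber_one fun a ha ↦ (hmem a ha).imp And.left And.left
  have hcard : #(fiber S 1) ≤ #P := by
    rw [← Finset.card_image_of_injOn (injOn_snd_fiber S 1)]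
    refine Finset.card_le_card (Finset.image_subset_iff.2 fun a ha ↦ ?_)
    obtain ⟨haS, ha1⟩ := mem_fiber.1 ha
    exact ((hmem a haS).resolve_left fun h ↦ one_ne_zero (ha1.symm.trans h.1)).2
  rw [hsum, Prod.fst_zero, eq_comm, ZMod.natCast_eq_zero_iff] at hfst
  have hempty : fiber S 1 = ∅ :=
    Finset.card_eq_zero.1 (Nat.eq_zero_of_dvd_of_lt hfst (hcard.trans_lt hP))
  have hzero : ∀ a ∈ S, a.1 = 0 ∧ a.2 ∈ T := fun a ha ↦ (hmem a ha).resolve_right fun h ↦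
    Finset.notMem_empty a (hempty ▸ mem_fiber.2 ⟨ha, h.1⟩)
  refine isZeroSumfree_val_iff.1 hT (S.image Prod.snd)
    (Finset.image_subset_iff.2 fun a ha ↦ (hzero a ha).2) (hne.image _) ?_
  rw [Finset.sum_image fun a ha b hb hab ↦
    Prod.ext ((hzero a ha).1.trans (hzero b hb).1.symm) hab, ← Prod.snd_sum, hsum, Prod.snd_zero]

lemma exists_isZeroSumfree_card_eq {n : ℕ} (hn : n < p) :
    ∃ A : Finset (ZMod p × ZMod p), IsZeroSumfree A.val ∧ #A = n + olk (ZMod p) 0 ∧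
      (∀ a ∈ A, a.1 = 0 ∨ a.1 = 1) ∧ (∑ a ∈ A, a).1 = n := by
  obtain ⟨T, hT, hTcard⟩ := (isGreatest_olk_zero (ZMod p)).1
  obtain ⟨P, -, hP⟩ := Finset.exists_subset_card_eq (s := (Finset.univ : Finset (ZMod p)))
    (n := n) (by rw [Finset.card_univ, ZMod.card]; exact hn.le)
  have hmem : ∀ a ∈ ({0} ×ˢ T ∪ {1} ×ˢ P : Finset (ZMod p × ZMod p)), a.1 = 0 ∨ a.1 = 1 :=
    fun a ha ↦ by
      simp only [Finset.mem_union, Finset.mem_product, Finset.mem_singleton] at ha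
      exact ha.imp And.left And.left
  have hfiber : fiber ({0} ×ˢ T ∪ {1} ×ˢ P : Finset (ZMod p × ZMod p)) 1 = {1} ×ˢ P := by
    ext a
    simp only [mem_fiber, Finset.mem_union, Finset.mem_product, Finset.mem_singleton]
    grind [one_ne_zero (α := ZMod p)]
  refine ⟨_, isZeroSumfree_union_product hT (hP.trans_lt hn), ?_, hmem, ?_⟩
  · have hdisj : Disjoint ({0} ×ˢ T) ({1} ×ˢ P : Finset (ZMod p × ZMod p)) :=
      Finset.disjoint_product.2 (.inl (by simp))
    rw [Finset.card_union_of_disjoint hdisj, Finset.card_product, Finset.card_product,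
      Finset.card_singleton, Finset.card_singleton, hTcard, hP, one_mul, one_mul, add_comm]
  · rw [fst_sum_eq_card_fiber_one hmem, hfiber, Finset.card_product, Finset.card_singleton, hP,
      one_mul]

lemma IsMinimalZeroSum.card_lt (hp6000 : 6000 < p) {S : Multiset (ZMod p × ZMod p)}
    (hS : IsMinimalZeroSum S) : Multiset.card S < p + olk (ZMod p) 0 + cmul 1 S := by
  rw [← cmul_one_add_card_toFinset S, add_comm, Nat.add_lt_add_iff_right]
  by_contra! hle
  obtain ⟨B, hBS, hB⟩ := Finset.exists_subset_card_eq hle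
  exact (hS.noProperZeroSum hBS).card_ne_add_olk hp6000 hB

theorem Ol_zmod_prod_zmod (hp6000 : 6000 < p) :
    Ol (ZMod p × ZMod p) = p + olk (ZMod p) 0 := by
  refine IsGreatest.csSup_eq ⟨?_, ?_⟩
  · obtain ⟨A, hA, hcard, -⟩ := exists_isZeroSumfree_card_eq (by lia : p - 1 < p)
    refine ⟨_, hA.isMinimalZeroSum_cons, cmul_one_cons_le_one A.nodup _, ?_⟩
    rw [Multiset.card_cons, Finset.card_val, hcard]
    lia
  · rintro _ ⟨S, hS, hcm, rfl⟩
    have := hS.card_lt hp6000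
    lia

theorem SD_zmod_prod_zmod (hp6000 : 6000 < p) :
    SD (ZMod p × ZMod p) = p + olk (ZMod p) 0 - 1 := by
  refine IsGreatest.csSup_eq ⟨?_, ?_⟩
  · obtain ⟨A, hA, hcard, hfst, hsum⟩ := exists_isZeroSumfree_card_eq (by lia : p - 2 < p)
    have hnotMem : -A.val.sum ∉ A.val := fun hmem ↦ by
      have hval : A.val.sum = ∑ a ∈ A, a := A.sum_val
      have htwo : (-A.val.sum).1 = (2 : ℕ) := by
        rw [hval, Prod.fst_neg, hsum, neg_eq_iff_add_eq_zero, ← Nat.cast_add,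
          Nat.sub_add_cancel (by lia), ZMod.natCast_self]
      have hinj := CharP.natCast_injOn_Iio (ZMod p) p
      have := hfst _ hmem
      rw [htwo, ← Nat.cast_zero, ← Nat.cast_one,
        hinj.eq_iff (Set.mem_Iio.2 (by lia)) (Set.mem_Iio.2 (by lia)),
        hinj.eq_iff (Set.mem_Iio.2 (by lia)) (Set.mem_Iio.2 (by lia))] at this
      lia
    refine ⟨_, hA.isMinimalZeroSum_cons, ?_, ?_⟩
    · exact (cmul_one_eq_zero_iff_nodup.2 (Multiset.nodup_cons.2 ⟨hnotMem, A.nodup⟩)).le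
    · rw [Multiset.card_cons, Finset.card_val, hcard]
      lia
  · rintro _ ⟨S, hS, hcm, rfl⟩
    have := hS.card_lt hp6000
    lia

end Constants

/-- For a prime `p > 6000`, `SD(C_p ⊕ C_p) = Ol(C_p ⊕ C_p) − 1`. -/
theorem SD_eq_Ol_sub_one_of_large_prime (p : ℕ) (hp : p.Prime) (h : 6000 < p) :
    SD (ZMod p × ZMod p) = Ol (ZMod p × ZMod p) - 1 := by
  have : Fact p.Prime := ⟨hp⟩
  rw [SD_zmod_prod_zmod h, Ol_zmod_prod_zmod h]
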